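/- arXiv:1408.4430 — 13 statements merged into one kernel-verified Lean document; each statement's English description precedes it below -/
import Mathlib

section
/- Let λ1, λ2, λ3, μ1, μ2, μ3 be positive real numbers such that λ1+λ2+λ3 ≤ μ1+μ2+μ3, λ1λ2+λ1λ3+λ2λ3 ≤ μ1μ2+μ1μ3+μ2μ3, and λ1λ2λ3 = μ1μ2μ3. Then (log λ1)² + (log λ2)² + (log λ3)² ≤ (log μ1)² + (log μ2)² + (log μ3)². -/
/-!
Let `φ t = log (1 + exp t)`, a smooth approximation of the ramp `max t 0`. The quadratic `a ^ 2 / 2`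
is an integral of translates of `φ`:
`∫ (φ (t + a) - φ t - a * 𝟙(t > 0)) dt = a ^ 2 / 2`.
Indeed, `φ` differs from the ramp by an integrable function, whose contribution cancels by
translation invariance, so that `φ` may be replaced by the ramp. Hence, if `a` and `b` have the same
sum, a pointwise inequality `∑ φ (t + a i) ≤ ∑ φ (t + b i)` integrates to `∑ a i ^ 2 ≤ ∑ b i ^ 2`.
For `a i = log (l i)` and `x = exp t` the left side is `log (∏ (1 + x * l i))`, the logarithm of a
polynomial in `x` whose coefficients are the elementary symmetric functions of the `l i`.
-/

open MeasureTheory Set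

/-- The increment of `φ` under translation by `a`, with its limit `a` at `+∞` subtracted on the
positive half-line; this makes it integrable whenever `φ` differs from the ramp `max t 0` by an
integrable function. -/
noncomputable def regularizedIncrement (φ : ℝ → ℝ) (a t : ℝ) : ℝ :=
  φ (t + a) - φ t - (Ioi 0).indicator (fun _ ↦ a) t

theorem regularizedIncrement_ramp (a t : ℝ) :
    regularizedIncrement (max · 0) a t =
      (Ioc (-a) 0).indicator (· + a) t - (Ioc 0 (-a)).indicator (· + a) t := by
  simp only [regularizedIncrement, indicator_apply, mem_Ioi, mem_Ioc]
  grind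

theorem integrable_indicator_Ioc_of_continuous {f : ℝ → ℝ} (hf : Continuous f) (a b : ℝ) :
    Integrable ((Ioc a b).indicator f) :=
  (integrable_indicator_iff measurableSet_Ioc).2 hf.integrableOn_Ioc

theorem integrable_regularizedIncrement_ramp (a : ℝ) :
    Integrable (regularizedIncrement (max · 0) a) := by
  rw [funext (regularizedIncrement_ramp a)]
  exact (integrable_indicator_Ioc_of_continuous (continuous_add_const a) _ _).sub
    (integrable_indicator_Ioc_of_continuous (continuous_add_const a) _ _)

theorem integral_regularizedIncrement_ramp (a : ℝ) :
    ∫ t, regularizedIncrement (max · 0) a t = a ^ 2 / 2 := by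
  have hint := integrable_indicator_Ioc_of_continuous (continuous_add_const a)
  calc ∫ t, regularizedIncrement (max · 0) a t
    _ = ∫ t in (-a)..0, (t + a) := by
      simp only [regularizedIncrement_ramp]
      rw [integral_sub (hint _ _) (hint _ _), integral_indicator measurableSet_Ioc,
        integral_indicator measurableSet_Ioc, intervalIntegral]
    _ = ∫ t in 0..a, t := by
      rw [intervalIntegral.integral_comp_add_right fun t ↦ t, neg_add_cancel, zero_add]
    _ = a ^ 2 / 2 := by simp

theorem regularizedIncrement_eq_sub_add_ramp (φ : ℝ → ℝ) (a t : ℝ) :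
    regularizedIncrement φ a t =
      (φ (t + a) - max (t + a) 0) - (φ t - max t 0) + regularizedIncrement (max · 0) a t := by
  simp only [regularizedIncrement]
  ring

section IntegrableSubRamp

variable {φ : ℝ → ℝ} (hφ : Integrable fun t ↦ φ t - max t 0)
include hφ

theorem integrable_regularizedIncrement (a : ℝ) : Integrable (regularizedIncrement φ a) := by
  rw [funext (regularizedIncrement_eq_sub_add_ramp φ a)]
  exact ((hφ.comp_add_right a).sub hφ).add (integrable_regularizedIncrement_ramp a)

theorem integral_regularizedIncrement (a : ℝ) :
    ∫ t, regularizedIncrement φ a t = a ^ 2 / 2 := by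
  have hφa : Integrable fun t ↦ φ (t + a) - max (t + a) 0 := hφ.comp_add_right a
  have hdiff : Integrable fun t ↦ (φ (t + a) - max (t + a) 0) - (φ t - max t 0) := hφa.sub hφ
  calc ∫ t, regularizedIncrement φ a t
    _ = (∫ t, (φ (t + a) - max (t + a) 0)) - (∫ t, (φ t - max t 0)) + a ^ 2 / 2 := by
      simp only [regularizedIncrement_eq_sub_add_ramp φ]
      rw [integral_add hdiff (integrable_regularizedIncrement_ramp a), integral_sub hφa hφ,
        integral_regularizedIncrement_ramp]
    _ = a ^ 2 / 2 := by
      rw [integral_add_right_eq_self (fun t ↦ φ t - max t 0), sub_self, zero_add]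

theorem sum_sq_le_sum_sq_of_sum_translate_le {ι : Type*} {s : Finset ι} {a b : ι → ℝ}
    (hsum : ∑ i ∈ s, a i = ∑ i ∈ s, b i)
    (hle : ∀ t, ∑ i ∈ s, φ (t + a i) ≤ ∑ i ∈ s, φ (t + b i)) :
    ∑ i ∈ s, a i ^ 2 ≤ ∑ i ∈ s, b i ^ 2 := by
  have hintegral (c : ι → ℝ) :
      ∫ t, ∑ i ∈ s, regularizedIncrement φ (c i) t = (∑ i ∈ s, c i ^ 2) / 2 := by
    rw [integral_finsetSum s fun i _ ↦ integrable_regularizedIncrement hφ (c i), Finset.sum_div]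
    simp only [integral_regularizedIncrement hφ]
  have hpointwise (t : ℝ) :
      ∑ i ∈ s, regularizedIncrement φ (a i) t ≤ ∑ i ∈ s, regularizedIncrement φ (b i) t := by
    have hind : ∑ i ∈ s, (Ioi 0).indicator (fun _ ↦ a i) t =
        ∑ i ∈ s, (Ioi 0).indicator (fun _ ↦ b i) t := by
      by_cases ht : t ∈ Ioi 0 <;> simp [ht, hsum]
    simp only [regularizedIncrement, Finset.sum_sub_distrib, hind]
    gcongr ?_ - _ - _
    exact hle t
  have := integral_mono
    (integrable_finsetSum s fun i _ ↦ integrable_regularizedIncrement hφ (a i))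
    (integrable_finsetSum s fun i _ ↦ integrable_regularizedIncrement hφ (b i)) hpointwise
  rw [hintegral, hintegral] at this
  linarith

end IntegrableSubRamp

/-- The softplus function, a smooth approximation of the ramp `max t 0`. -/
noncomputable def softplus (t : ℝ) : ℝ := Real.log (1 + Real.exp t)

theorem softplus_sub_max_zero (t : ℝ) :
    softplus t - max t 0 = Real.log (1 + Real.exp (-|t|)) := by
  rcases le_total t 0 with ht | ht
  · simp [softplus, ht, abs_of_nonpos]
  · have hfactor : 1 + Real.exp t = Real.exp t * (1 + Real.exp (-t)) := by
      rw [mul_add, ← Real.exp_add]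
      simp [add_comm]
    rw [softplus, hfactor, Real.log_mul (by positivity) (by positivity), Real.log_exp,
      max_eq_left ht, abs_of_nonneg ht]
    ring

theorem integrable_exp_neg_abs : Integrable fun t : ℝ ↦ Real.exp (-|t|) := by
  -- A non-integrable function would have Bochner integral `0`.
  refine .of_integral_ne_zero ?_
  rw [integral_comp_abs (f := fun t ↦ Real.exp (-t)), integral_exp_neg_Ioi_zero]
  norm_num

theorem integrable_softplus_sub_max_zero : Integrable fun t ↦ softplus t - max t 0 := by
  simp only [softplus_sub_max_zero]
  have hpos (t : ℝ) : 0 < 1 + Real.exp (-|t|) := by positivity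
  have hcont : Continuous fun t : ℝ ↦ Real.log (1 + Real.exp (-|t|)) :=
    Continuous.log (by fun_prop) fun t ↦ (hpos t).ne'
  refine integrable_exp_neg_abs.mono' hcont.aestronglyMeasurable (.of_forall fun t ↦ ?_)
  rw [Real.norm_of_nonneg (Real.log_nonneg (le_add_of_nonneg_right (Real.exp_nonneg _)))]
  linarith [Real.log_le_sub_one_of_pos (hpos t)]

section SymmetricFunctions

variable {ι : Type*} {s : Finset ι}

theorem sum_softplus_add_log {l : ι → ℝ} (hl : ∀ i ∈ s, 0 < l i) (t : ℝ) :
    ∑ i ∈ s, softplus (t + Real.log (l i)) = Real.log (∏ i ∈ s, (1 + Real.exp t * l i)) := by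
  have hne (i : ι) (hi : i ∈ s) : 1 + Real.exp t * l i ≠ 0 := by
    have := hl i hi
    positivity
  rw [Real.log_prod hne]
  refine Finset.sum_congr rfl fun i hi ↦ ?_
  rw [softplus, Real.exp_add, Real.exp_log (hl i hi)]

theorem sum_sq_log_le_of_prod_one_add_mul_le {l m : ι → ℝ}
    (hl : ∀ i ∈ s, 0 < l i) (hm : ∀ i ∈ s, 0 < m i)
    (hprod : ∏ i ∈ s, l i = ∏ i ∈ s, m i)
    (hle : ∀ x > 0, ∏ i ∈ s, (1 + x * l i) ≤ ∏ i ∈ s, (1 + x * m i)) :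
    ∑ i ∈ s, Real.log (l i) ^ 2 ≤ ∑ i ∈ s, Real.log (m i) ^ 2 := by
  refine sum_sq_le_sum_sq_of_sum_translate_le integrable_softplus_sub_max_zero ?_ fun t ↦ ?_
  · rw [← Real.log_prod fun i hi ↦ (hl i hi).ne', hprod, Real.log_prod fun i hi ↦ (hm i hi).ne']
  · rw [sum_softplus_add_log hl, sum_softplus_add_log hm]
    refine Real.log_le_log (Finset.prod_pos fun i hi ↦ ?_) (hle _ (Real.exp_pos t))
    have := hl i hi
    positivity

theorem prod_one_add_mul_eq_sum_powersetCard {R : Type*} [CommSemiring R] (x : R) (f : ι → R) :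
    ∏ i ∈ s, (1 + x * f i) =
      ∑ k ∈ Finset.range (s.card + 1), x ^ k * ∑ t ∈ s.powersetCard k, ∏ i ∈ t, f i := by
  classical
  rw [Finset.prod_one_add, Finset.sum_powerset]
  refine Finset.sum_congr rfl fun k _ ↦ ?_
  rw [Finset.mul_sum]
  refine Finset.sum_congr rfl fun t ht ↦ ?_
  rw [Finset.prod_mul_distrib, Finset.prod_const, (Finset.mem_powersetCard.1 ht).2]

theorem sum_of_squared_logarithms_inequality_3D_general {l m : ι → ℝ}
    (hl : ∀ i ∈ s, 0 < l i) (hm : ∀ i ∈ s, 0 < m i)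
    (hesymm : ∀ k < s.card,
      ∑ t ∈ s.powersetCard k, ∏ i ∈ t, l i ≤ ∑ t ∈ s.powersetCard k, ∏ i ∈ t, m i)
    (hprod : ∏ i ∈ s, l i = ∏ i ∈ s, m i) :
    ∑ i ∈ s, Real.log (l i) ^ 2 ≤ ∑ i ∈ s, Real.log (m i) ^ 2 := by
  refine sum_sq_log_le_of_prod_one_add_mul_le hl hm hprod fun x hx ↦ ?_
  simp only [prod_one_add_mul_eq_sum_powersetCard, Finset.sum_range_succ _ s.card,
    Finset.powersetCard_self, Finset.sum_singleton, hprod]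
  gcongr ∑ k ∈ _, _ * ?_ + _ with k hk
  exact hesymm k (Finset.mem_range.1 hk)

end SymmetricFunctions

theorem sum_powersetCard_two_fin_three {R : Type*} [CommSemiring R] (f : Fin 3 → R) :
    ∑ t ∈ Finset.univ.powersetCard 2, ∏ i ∈ t, f i = f 0 * f 1 + f 0 * f 2 + f 1 * f 2 := by
  have hpairs : (Finset.univ : Finset (Fin 3)).powersetCard 2 = {{0, 1}, {0, 2}, {1, 2}} := by
    decide
  rw [hpairs, Finset.sum_insert (by decide), Finset.sum_pair (by decide)]
  simp [add_assoc]

theorem sum_of_squared_logarithms_inequality_3D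
    (l1 l2 l3 m1 m2 m3 : ℝ)
    (hl1 : 0 < l1) (hl2 : 0 < l2) (hl3 : 0 < l3)
    (hm1 : 0 < m1) (hm2 : 0 < m2) (hm3 : 0 < m3)
    (h1 : l1 + l2 + l3 ≤ m1 + m2 + m3)
    (h2 : l1 * l2 + l1 * l3 + l2 * l3 ≤ m1 * m2 + m1 * m3 + m2 * m3)
    (h3 : l1 * l2 * l3 = m1 * m2 * m3) :
    (Real.log l1) ^ 2 + (Real.log l2) ^ 2 + (Real.log l3) ^ 2 ≤
      (Real.log m1) ^ 2 + (Real.log m2) ^ 2 + (Real.log m3) ^ 2 := by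
  have hesymm : ∀ k < 3, ∑ t ∈ Finset.univ.powersetCard k, ∏ i ∈ t, ![l1, l2, l3] i ≤
      ∑ t ∈ Finset.univ.powersetCard k, ∏ i ∈ t, ![m1, m2, m3] i := by
    intro k hk
    interval_cases k
    · simp
    · simpa [Finset.powersetCard_one, Fin.sum_univ_three] using h1
    · simpa [sum_powersetCard_two_fin_three] using h2
  simpa [Fin.sum_univ_three] using
    sum_of_squared_logarithms_inequality_3D_general (s := Finset.univ)
      (l := ![l1, l2, l3]) (m := ![m1, m2, m3])
      (by simp [Fin.forall_fin_succ, *]) (by simp [Fin.forall_fin_succ, *])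
      (by simpa using hesymm) (by simpa [Fin.prod_univ_three] using h3)
end

section
/- Let λ1, λ2, μ1, μ2 be positive real numbers such that λ1+λ2 ≤ μ1+μ2 and λ1λ2 = μ1μ2. Then (log λ1)² + (log λ2)² ≤ (log μ1)² + (log μ2)². -/
/-!
From `l1 * l2 = m1 * m2` one gets `(l1 - m1) * (l1 - m2) = l1 * (l1 + l2 - (m1 + m2)) ≤ 0`, so `l1`
lies between `m1` and `m2`. Hence `log l1` lies between `log m1` and `log m2`, while
`log l1 + log l2 = log m1 + log m2`: the pair of the `log m`s majorizes that of the `log l`s, and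
passing to a majorizing pair can only increase a sum of values of a convex function.
-/

open Set

section Convex

variable {𝕜 E β : Type*} [Semiring 𝕜] [AddCommMonoid E] [Module 𝕜 E]

theorem smul_add_smul_add_swap_of_add_eq_one {t u : 𝕜} (h : t + u = 1) (a b : E) :
    (t • a + u • b) + (u • a + t • b) = a + b := by
  rw [add_comm (u • a), add_add_add_comm, ← smul_add, add_comm (u • b), ← smul_add, ← add_smul, h,
    one_smul]

variable [PartialOrder 𝕜] [IsLeftCancelAdd E]
  [AddCommMonoid β] [PartialOrder β] [IsOrderedAddMonoid β] [Module 𝕜 β]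

theorem add_le_add_of_convexOn_of_mem_segment {s : Set E} {f : E → β} {a b x y : E}
    (hf : ConvexOn 𝕜 s f) (ha : a ∈ s) (hb : b ∈ s) (hx : x ∈ segment 𝕜 a b)
    (hxy : x + y = a + b) : f x + f y ≤ f a + f b := by
  obtain ⟨t, u, ht, hu, htu, rfl⟩ := hx
  have hy : y = u • a + t • b :=
    add_left_cancel (hxy.trans (smul_add_smul_add_swap_of_add_eq_one htu a b).symm)
  calc f (t • a + u • b) + f y
      ≤ (t • f a + u • f b) + (u • f a + t • f b) := by
        rw [hy]
        exact add_le_add (hf.2 ha hb ht hu htu) (hf.2 ha hb hu ht ((add_comm u t).trans htu))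
    _ = f a + f b := smul_add_smul_add_swap_of_add_eq_one htu (f a) (f b)

end Convex

theorem mem_uIcc_of_add_le_add_of_mul_eq_mul {R : Type*} [CommRing R] [LinearOrder R]
    [IsStrictOrderedRing R] {a b x y : R} (hx : 0 ≤ x) (hadd : x + y ≤ a + b)
    (hmul : x * y = a * b) : x ∈ uIcc a b := by
  have h : (x - a) * (x - b) ≤ 0 :=
    calc (x - a) * (x - b) = x * (x + y - (a + b)) := by linear_combination -hmul
      _ ≤ 0 := mul_nonpos_of_nonneg_of_nonpos hx (sub_nonpos.2 hadd)
  simpa only [mem_uIcc, mul_nonpos_iff, sub_nonneg, sub_nonpos, and_comm, or_comm] using h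

theorem log_mem_uIcc {a b x : ℝ} (ha : 0 < a) (hb : 0 < b) (hx : x ∈ uIcc a b) :
    Real.log x ∈ uIcc (Real.log a) (Real.log b) :=
  (Real.strictMonoOn_log.monotoneOn.mono (ordConnected_Ioi.uIcc_subset ha hb)).mapsTo_uIcc hx

theorem sum_of_squared_logarithms_inequality_2D_general
    {β : Type*} [AddCommMonoid β] [PartialOrder β] [IsOrderedAddMonoid β] [Module ℝ β]
    {s : Set ℝ} {f : ℝ → β} (hf : ConvexOn ℝ s f) {l1 l2 m1 m2 : ℝ}
    (hl1 : 0 < l1) (hl2 : 0 < l2) (hm1 : 0 < m1) (hm2 : 0 < m2)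
    (hs1 : Real.log m1 ∈ s) (hs2 : Real.log m2 ∈ s)
    (h1 : l1 + l2 ≤ m1 + m2) (h2 : l1 * l2 = m1 * m2) :
    f (Real.log l1) + f (Real.log l2) ≤ f (Real.log m1) + f (Real.log m2) := by
  have hlog : Real.log l1 ∈ segment ℝ (Real.log m1) (Real.log m2) := by
    rw [segment_eq_uIcc]
    exact log_mem_uIcc hm1 hm2 (mem_uIcc_of_add_le_add_of_mul_eq_mul hl1.le h1 h2)
  have hsum : Real.log l1 + Real.log l2 = Real.log m1 + Real.log m2 := by
    rw [← Real.log_mul hl1.ne' hl2.ne', h2, Real.log_mul hm1.ne' hm2.ne']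
  exact add_le_add_of_convexOn_of_mem_segment hf hs1 hs2 hlog hsum

theorem sum_of_squared_logarithms_inequality_2D
    (l1 l2 m1 m2 : ℝ)
    (hl1 : 0 < l1) (hl2 : 0 < l2) (hm1 : 0 < m1) (hm2 : 0 < m2)
    (h1 : l1 + l2 ≤ m1 + m2)
    (h2 : l1 * l2 = m1 * m2) :
    (Real.log l1) ^ 2 + (Real.log l2) ^ 2 ≤ (Real.log m1) ^ 2 + (Real.log m2) ^ 2 :=
  sum_of_squared_logarithms_inequality_2D_general even_two.convexOn_pow
    hl1 hl2 hm1 hm2 (mem_univ _) (mem_univ _) h1 h2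
end

section
/- For every real k > 0, the function g : (0,∞)² → ℝ defined by g(λ1,λ2) = exp((k/2)·(log(λ1/λ2))²) is not convex on the open positive quadrant (0,∞)². -/
/-!
The energy is homogeneous of degree zero. A convex function `f` of this kind satisfies
`(a + b) * f (a • x + b • y) ≤ a * f x + b * f y` for all `a, b > 0`. Writing
`x + y = x + c • (c⁻¹ • y)` and letting `c` tend to zero gives `f (x + y) ≤ f x`. In an open cone
every `y` equals `ε • x + (y - ε • x)` with both summands in the cone once `ε > 0` is small, so
`f y ≤ f x`, and `f` is constant. The energy takes different values at the ratios `1` and `2`.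
-/

open Filter Topology

section ConvexCone

variable {𝕜 E : Type*} [Field 𝕜] [LinearOrder 𝕜] [IsStrictOrderedRing 𝕜]
  {f : E → 𝕜} {x y : E}

section AddCommMonoid

variable [AddCommMonoid E] [Module 𝕜 E] {C : ConvexCone 𝕜 E}

lemma add_mul_map_smul_add_smul_le_of_convexOn_of_map_smul (hf : ConvexOn 𝕜 C f)
    (hsmul : ∀ ⦃c : 𝕜⦄, 0 < c → ∀ ⦃x⦄, x ∈ C → f (c • x) = f x) (hx : x ∈ C) (hy : y ∈ C)
    {a b : 𝕜} (ha : 0 < a) (hb : 0 < b) :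
    (a + b) * f (a • x + b • y) ≤ a * f x + b * f y := by
  have hab : 0 < a + b := add_pos ha hb
  have hmem : a • x + b • y ∈ C := C.add_mem (C.smul_mem ha hx) (C.smul_mem hb hy)
  have hconv : f ((a + b)⁻¹ • (a • x + b • y)) ≤ (a / (a + b)) * f x + (b / (a + b)) * f y := by
    simpa only [smul_add, smul_smul, inv_mul_eq_div, smul_eq_mul] using
      (convexOn_iff_div.mp hf).2 hx hy ha.le hb.le hab
  rw [hsmul (inv_pos.mpr hab) hmem] at hconv
  calc (a + b) * f (a • x + b • y)
      ≤ (a + b) * ((a / (a + b)) * f x + (b / (a + b)) * f y) := by gcongr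
    _ = a * f x + b * f y := by field_simp

lemma map_add_le_of_convexOn_of_map_smul (hf : ConvexOn 𝕜 C f)
    (hsmul : ∀ ⦃c : 𝕜⦄, 0 < c → ∀ ⦃x⦄, x ∈ C → f (c • x) = f x) (hx : x ∈ C) (hy : y ∈ C) :
    f (x + y) ≤ f x := by
  by_contra! hlt
  obtain ⟨c, hc, hsmall⟩ := exists_pos_mul_lt (sub_pos.mpr hlt) (f y - f (x + y))
  have hc' : 0 < c⁻¹ := inv_pos.mpr hc
  have hle : (1 + c) * f (x + y) ≤ f x + c * f y := by
    simpa only [one_smul, one_mul, smul_inv_smul₀ hc.ne', hsmul hc' hy] using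
      add_mul_map_smul_add_smul_le_of_convexOn_of_map_smul hf hsmul hx (C.smul_mem hc' hy)
        one_pos hc
  linarith

end AddCommMonoid

variable [AddCommGroup E] [Module 𝕜 E] [TopologicalSpace 𝕜] [OrderTopology 𝕜]
  [TopologicalSpace E] [ContinuousSub E] [ContinuousSMul 𝕜 E]

variable (𝕜) in
lemma exists_pos_sub_smul_mem_of_isOpen {s : Set E} (hs : IsOpen s) (x : E) (hy : y ∈ s) :
    ∃ ε : 𝕜, 0 < ε ∧ y - ε • x ∈ s := by
  have hcont : Continuous fun ε : 𝕜 => y - ε • x := by fun_prop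
  have hnear : ∀ᶠ ε : 𝕜 in 𝓝[>] 0, y - ε • x ∈ s :=
    (hcont.continuousAt.eventually_mem (hs.mem_nhds (by simpa using hy))).filter_mono
      nhdsWithin_le_nhds
  have hpos : ∀ᶠ ε : 𝕜 in 𝓝[>] 0, 0 < ε := self_mem_nhdsWithin
  exact (hpos.and hnear).exists

lemma map_eq_of_convexOn_of_map_smul_of_isOpen {C : ConvexCone 𝕜 E}
    (hC : IsOpen (C : Set E)) (hf : ConvexOn 𝕜 C f)
    (hsmul : ∀ ⦃c : 𝕜⦄, 0 < c → ∀ ⦃x⦄, x ∈ C → f (c • x) = f x) (hx : x ∈ C) (hy : y ∈ C) :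
    f x = f y := by
  have map_le : ∀ {u v : E}, u ∈ C → v ∈ C → f v ≤ f u := fun {u v} hu hv => by
    obtain ⟨ε, hε, hmem⟩ := exists_pos_sub_smul_mem_of_isOpen 𝕜 hC u hv
    calc f v = f (ε • u + (v - ε • u)) := by rw [add_sub_cancel]
      _ ≤ f (ε • u) := map_add_le_of_convexOn_of_map_smul hf hsmul (C.smul_mem hε hu) hmem
      _ = f u := hsmul hε hu
  exact le_antisymm (map_le hy hx) (map_le hx hy)

end ConvexCone

section Quadrant

variable {𝕜 : Type*} [Field 𝕜] [LinearOrder 𝕜] [IsStrictOrderedRing 𝕜]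

variable (𝕜) in
/-- The open positive quadrant, bundled as a convex cone so that the results on functions that are
homogeneous of degree zero apply to it. -/
def openQuadrant : ConvexCone 𝕜 (𝕜 × 𝕜) where
  carrier := {p | 0 < p.1 ∧ 0 < p.2}
  smul_mem' _ hc _ hp := ⟨mul_pos hc hp.1, mul_pos hc hp.2⟩
  add_mem' _ hp _ hq := ⟨add_pos hp.1 hq.1, add_pos hp.2 hq.2⟩

lemma isOpen_openQuadrant [TopologicalSpace 𝕜] [OrderClosedTopology 𝕜] :
    IsOpen (openQuadrant 𝕜 : Set (𝕜 × 𝕜)) :=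
  (isOpen_lt continuous_const continuous_fst).inter (isOpen_lt continuous_const continuous_snd)

lemma eq_of_convexOn_comp_fst_div_snd {φ : 𝕜 → 𝕜}
    (hφ : ConvexOn 𝕜 (openQuadrant 𝕜 : Set (𝕜 × 𝕜)) fun p => φ (p.1 / p.2))
    {r s : 𝕜} (hr : 0 < r) (hs : 0 < s) : φ r = φ s := by
  let _ : TopologicalSpace 𝕜 := Preorder.topology 𝕜
  have : OrderTopology 𝕜 := ⟨rfl⟩
  have hsmul : ∀ ⦃c : 𝕜⦄, 0 < c → ∀ ⦃p : 𝕜 × 𝕜⦄, p ∈ openQuadrant 𝕜 →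
      φ ((c • p).1 / (c • p).2) = φ (p.1 / p.2) := fun c hc p _ => by
    rw [Prod.smul_fst, Prod.smul_snd, smul_eq_mul, smul_eq_mul, mul_div_mul_left _ _ hc.ne']
  have hr' : (r, 1) ∈ openQuadrant 𝕜 := ⟨hr, one_pos⟩
  have hs' : (s, 1) ∈ openQuadrant 𝕜 := ⟨hs, one_pos⟩
  simpa only [div_one] using
    map_eq_of_convexOn_of_map_smul_of_isOpen isOpen_openQuadrant hφ hsmul hr' hs'

end Quadrant

theorem isochoric_exp_hencky_not_convex_general (k : ℝ) (hk : k ≠ 0) :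
    ¬ ConvexOn ℝ {p : ℝ × ℝ | 0 < p.1 ∧ 0 < p.2}
      (fun p : ℝ × ℝ => Real.exp ((k / 2) * (Real.log (p.1 / p.2)) ^ 2)) := by
  intro hconv
  have heq : Real.exp ((k / 2) * Real.log 2 ^ 2) = Real.exp ((k / 2) * Real.log 1 ^ 2) :=
    eq_of_convexOn_comp_fst_div_snd (φ := fun r => Real.exp ((k / 2) * Real.log r ^ 2)) hconv
      two_pos one_pos
  have hzero : (k / 2) * Real.log 2 ^ 2 = 0 := by simpa using Real.exp_injective heq
  have hlog : Real.log 2 ≠ 0 := (Real.log_pos one_lt_two).ne'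
  exact mul_ne_zero (div_ne_zero hk two_ne_zero) (pow_ne_zero 2 hlog) hzero

theorem isochoric_exp_hencky_not_convex (k : ℝ) (hk : 0 < k) :
    ¬ ConvexOn ℝ {p : ℝ × ℝ | 0 < p.1 ∧ 0 < p.2}
      (fun p : ℝ × ℝ => Real.exp ((k / 2) * (Real.log (p.1 / p.2)) ^ 2)) :=
  isochoric_exp_hencky_not_convex_general k hk.ne'
end

section
/- Let k > 0 and define ψ̂ : [0,∞)×(0,∞) → ℝ by ψ̂(i1,i2) = exp((k/2)·(log((i1+√(i1²−4i2))/(i1−√(i1²−4i2))))²) if i1² − 4i2 ≥ 0, and ψ̂(i1,i2) = 1 otherwise. Then ψ̂ is convex on [0,∞)×(0,∞) if and only if k ≥ 1/3. -/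
/-!
With `c = cosh (log (λ₁ / λ₂)) = i₁² / (2 i₂) - 1`, the function `ψ̂` is the composition of
`G c = exp (k / 2 * arcosh c ^ 2)`, increasing on `[1, ∞)`, with the convex function `max c 1` of
`(i₁, i₂)`; moreover `c` is affine along the diagonal `i₁ = i₂`, where it takes every value in
`[1, ∞)`. Hence `ψ̂` is convex iff `G` is. Writing `c = cosh x`, the sign of `G''` is that of
`(1 + k x²) sinh x - x cosh x`, and `x coth x ≤ 1 + x² / 3` with equality to second order at `0`,
which makes `k = 1 / 3` the threshold.
-/

open Real Set

section Convexity

lemma convexOn_iff_forall_hasDerivAt2_nonneg {D : Set ℝ} (hD : Convex ℝ D) {f f' f'' : ℝ → ℝ}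
    (hf : ContinuousOn f D) (hf' : ∀ x ∈ interior D, HasDerivAt f (f' x) x)
    (hf'' : ∀ x ∈ interior D, HasDerivAt f' (f'' x) x) :
    ConvexOn ℝ D f ↔ ∀ x ∈ interior D, 0 ≤ f'' x := by
  refine ⟨fun hconv x hx ↦ ?_, convexOn_of_hasDerivWithinAt2_nonneg hD hf
    (fun x hx ↦ (hf' x hx).hasDerivWithinAt) (fun x hx ↦ (hf'' x hx).hasDerivWithinAt)⟩
  have hmono : MonotoneOn f' (interior D) :=
    ((hconv.subset interior_subset hD.interior).monotoneOn_deriv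
      fun y hy ↦ (hf' y hy).differentiableAt).congr fun y hy ↦ (hf' y hy).deriv
  rw [← (hf'' x hx).deriv, ← derivWithin_of_isOpen isOpen_interior hx]
  exact hmono.derivWithin_nonneg

lemma convexOn_sq_div {𝕜 : Type*} [Field 𝕜] [LinearOrder 𝕜] [IsStrictOrderedRing 𝕜] :
    ConvexOn 𝕜 (univ ×ˢ Ioi 0) fun p : 𝕜 × 𝕜 ↦ p.1 ^ 2 / p.2 := by
  refine convexOn_iff_forall_pos.2 ⟨convex_univ.prod (convex_Ioi 0), ?_⟩
  rintro ⟨x, y⟩ ⟨-, hy : 0 < y⟩ ⟨u, v⟩ ⟨-, hv : 0 < v⟩ a b ha hb -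
  calc (a * x + b * u) ^ 2 / (a * y + b * v)
      ≤ (a * x) ^ 2 / (a * y) + (b * u) ^ 2 / (b * v) := by
        simpa [Fin.sum_univ_two] using Finset.sq_sum_div_le_sum_sq_div Finset.univ ![a * x, b * u]
          (g := ![a * y, b * v]) (by simp [Fin.forall_fin_two, *])
    _ = a * (x ^ 2 / y) + b * (u ^ 2 / v) := by field_simp

end Convexity

section HyperbolicInequalities

variable {k x : ℝ}

lemma hasDerivAt_mul_cosh_sub_sinh (x : ℝ) :
    HasDerivAt (fun y ↦ y * cosh y - sinh y) (x * sinh x) x :=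
  (((hasDerivAt_id x).mul (hasDerivAt_cosh x)).sub (hasDerivAt_sinh x)).congr_deriv (by simp)

lemma pow_three_div_three_le_mul_cosh_sub_sinh (hx : 0 ≤ x) :
    x ^ 3 / 3 ≤ x * cosh x - sinh x := by
  have hderiv (y : ℝ) : HasDerivAt (fun z ↦ z ^ 3 / 3) (y ^ 2) y :=
    ((hasDerivAt_pow 3 y).div_const 3).congr_deriv (by norm_num)
  refine image_le_of_deriv_right_le_deriv_boundary (a := 0) (by fun_prop)
    (fun y _ ↦ (hderiv y).hasDerivWithinAt) (by simp) (by fun_prop)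
    (fun y _ ↦ (hasDerivAt_mul_cosh_sub_sinh y).hasDerivWithinAt) (fun y hy ↦ ?_) ⟨hx, le_rfl⟩
  rw [sq]
  exact mul_le_mul_of_nonneg_left (self_le_sinh_iff.2 hy.1) hy.1

lemma sinh_le_mul_cosh (hx : 0 ≤ x) : sinh x ≤ x * cosh x := by
  linarith [pow_three_div_three_le_mul_cosh_sub_sinh hx, pow_nonneg hx 3]

lemma mul_cosh_le_one_add_sq_div_three_mul_sinh (hx : 0 ≤ x) :
    x * cosh x ≤ (1 + x ^ 2 / 3) * sinh x := by
  have hderiv (y : ℝ) : HasDerivAt (fun z ↦ z ^ 2 / 3 * sinh z)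
      (2 * y / 3 * sinh y + y ^ 2 / 3 * cosh y) y :=
    (((hasDerivAt_pow 2 y).div_const 3).mul (hasDerivAt_sinh y)).congr_deriv (by simp)
  suffices x * cosh x - sinh x ≤ x ^ 2 / 3 * sinh x by linarith
  refine image_le_of_deriv_right_le_deriv_boundary (a := 0) (by fun_prop)
    (fun y _ ↦ (hasDerivAt_mul_cosh_sub_sinh y).hasDerivWithinAt) (by simp) (by fun_prop)
    (fun y _ ↦ (hderiv y).hasDerivWithinAt) (fun y hy ↦ ?_) ⟨hx, le_rfl⟩
  have := mul_le_mul_of_nonneg_left (sinh_le_mul_cosh hy.1) hy.1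
  linarith

lemma forall_mul_cosh_le_mul_sinh_iff :
    (∀ x > 0, x * cosh x ≤ (1 + k * x ^ 2) * sinh x) ↔ 1 / 3 ≤ k := by
  refine ⟨fun h ↦ ?_, fun hk x hx ↦ ?_⟩
  · have hk_cosh : ∀ x > 0, 1 / 3 ≤ k * cosh x := fun x hx ↦ by
      have hcube : x ^ 3 / 3 ≤ k * x ^ 2 * sinh x := by
        linarith [pow_three_div_three_le_mul_cosh_sub_sinh hx.le, h x hx]
      have hk : 0 ≤ k := by
        have hpos : 0 < x ^ 2 * sinh x := mul_pos (pow_pos hx 2) (sinh_pos_iff.2 hx)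
        refine nonneg_of_mul_nonneg_left (?_ : 0 ≤ k * (x ^ 2 * sinh x)) hpos
        linarith [pow_pos hx 3]
      refine le_of_mul_le_mul_left ?_ (pow_pos hx 3)
      calc x ^ 3 * (1 / 3) ≤ k * x ^ 2 * sinh x := by linarith
        _ ≤ k * x ^ 2 * (x * cosh x) := by gcongr; exact sinh_le_mul_cosh hx.le
        _ = x ^ 3 * (k * cosh x) := by ring
    have hlim : Filter.Tendsto (fun x ↦ k * cosh x) (nhdsWithin 0 (Ioi 0)) (nhds k) := by
      simpa using ((continuous_cosh.const_mul k).tendsto 0).mono_left nhdsWithin_le_nhds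
    exact ge_of_tendsto hlim (eventually_mem_nhdsWithin.mono hk_cosh)
  · have : 0 ≤ sinh x := (sinh_pos_iff.2 hx).le
    calc x * cosh x ≤ (1 + x ^ 2 / 3) * sinh x := mul_cosh_le_one_add_sq_div_three_mul_sinh hx.le
      _ = (1 + 1 / 3 * x ^ 2) * sinh x := by ring
      _ ≤ (1 + k * x ^ 2) * sinh x := by gcongr

end HyperbolicInequalities

section ExpSqArcosh

variable {k c : ℝ}

/-- The energy `exp (k / 2 * (log (λ₁ / λ₂)) ^ 2)` as a function of `c = cosh (log (λ₁ / λ₂))`. -/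
noncomputable def expSqArcosh (k c : ℝ) : ℝ := exp (k / 2 * arcosh c ^ 2)

lemma continuousOn_expSqArcosh : ContinuousOn (expSqArcosh k) (Ici 1) :=
  ((continuousOn_arcosh.pow 2).const_mul (k / 2)).rexp

lemma monotoneOn_expSqArcosh (hk : 0 ≤ k) : MonotoneOn (expSqArcosh k) (Ici 1) := by
  intro c (hc : 1 ≤ c) d _ hcd
  have harcosh : arcosh c ≤ arcosh d := (arcosh_le_arcosh (by linarith) (by linarith)).2 hcd
  have := arcosh_nonneg hc
  unfold expSqArcosh
  gcongr

lemma hasDerivAt_arcosh_inv_sinh (hc : 1 < c) : HasDerivAt arcosh (sinh (arcosh c))⁻¹ c := by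
  rw [sinh_arcosh hc.le]
  exact hasDerivAt_arcosh hc

lemma hasDerivAt_expSqArcosh (hc : 1 < c) :
    HasDerivAt (expSqArcosh k) (expSqArcosh k c * (k * arcosh c / sinh (arcosh c))) c :=
  (((hasDerivAt_arcosh_inv_sinh hc).pow 2).const_mul (k / 2)).exp.congr_deriv <| by
    simp only [expSqArcosh, Pi.pow_apply]
    ring

lemma hasDerivAt_deriv_expSqArcosh (hc : 1 < c) :
    HasDerivAt (fun c ↦ expSqArcosh k c * (k * arcosh c / sinh (arcosh c)))
      (k * expSqArcosh k c / sinh (arcosh c) ^ 3 *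
        ((1 + k * arcosh c ^ 2) * sinh (arcosh c) - arcosh c * cosh (arcosh c))) c := by
  have hsinh : sinh (arcosh c) ≠ 0 := (sinh_pos_iff.2 (arcosh_pos hc)).ne'
  have harcosh := hasDerivAt_arcosh_inv_sinh hc
  refine ((hasDerivAt_expSqArcosh hc).mul
    ((harcosh.const_mul k).div harcosh.sinh hsinh)).congr_deriv ?_
  simp only [Pi.div_apply]
  field_simp
  ring

lemma convexOn_expSqArcosh_iff (hk : 0 < k) :
    ConvexOn ℝ (Ici 1) (expSqArcosh k) ↔ 1 / 3 ≤ k := by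
  rw [convexOn_iff_forall_hasDerivAt2_nonneg (convex_Ici 1) continuousOn_expSqArcosh
    (fun c hc ↦ hasDerivAt_expSqArcosh (by simpa using hc))
    (fun c hc ↦ hasDerivAt_deriv_expSqArcosh (by simpa using hc)), interior_Ici,
    ← forall_mul_cosh_le_mul_sinh_iff]
  have hnonneg_iff (c : ℝ) (hc : 1 < c) (A : ℝ) :
      0 ≤ k * expSqArcosh k c / sinh (arcosh c) ^ 3 * A ↔ 0 ≤ A := by
    have hsinh : 0 < sinh (arcosh c) := sinh_pos_iff.2 (arcosh_pos hc)
    exact mul_nonneg_iff_of_pos_left (div_pos (mul_pos hk (exp_pos _)) (pow_pos hsinh 3))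
  refine ⟨fun h x hx ↦ ?_, fun h c hc ↦ ?_⟩
  · have hc : 1 < cosh x := one_lt_cosh.2 hx.ne'
    simpa [arcosh_cosh hx.le] using (hnonneg_iff _ hc _).1 (h _ hc)
  · exact (hnonneg_iff c hc _).2 (sub_nonneg.2 (h _ (arcosh_pos hc)))

end ExpSqArcosh

section Distortion

/-- The distortion `(λ₁ / λ₂ + λ₂ / λ₁) / 2 = cosh (log (λ₁ / λ₂))` in terms of the principal
invariants `p = (λ₁ + λ₂, λ₁ * λ₂)`, extended by `1` to the pairs `p` with `p.1 ^ 2 < 4 * p.2`,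
which are not the invariants of any stretch. -/
noncomputable def distortion (p : ℝ × ℝ) : ℝ := max (p.1 ^ 2 / p.2 / 2 - 1) 1

lemma one_le_distortion (p : ℝ × ℝ) : 1 ≤ distortion p := le_max_right _ _

lemma convexOn_distortion : ConvexOn ℝ (univ ×ˢ Ioi 0) distortion := by
  have hquad : ConvexOn ℝ (univ ×ˢ Ioi 0) fun p : ℝ × ℝ ↦ p.1 ^ 2 / p.2 / 2 - 1 :=
    ((convexOn_sq_div.smul (inv_nonneg.2 zero_le_two)).add_const (-1 : ℝ)).congr fun p _ ↦ by
      simp only [Pi.add_apply, smul_eq_mul]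
      ring
  exact hquad.sup (convexOn_const 1 hquad.1)

lemma distortion_lineMap {c : ℝ} (hc : 1 ≤ c) :
    distortion (AffineMap.lineMap (2, 2) (4, 4) c) = c := by
  have : (c * (4 - 2) + 2) ^ 2 / (c * (4 - 2) + 2) / 2 - 1 = c := by
    rw [sq, mul_self_div_self]
    ring
  simp [distortion, AffineMap.lineMap_apply, this, hc]

lemma image_distortion : distortion '' (Ici 0 ×ˢ Ioi 0) = Ici 1 := by
  refine Subset.antisymm (image_subset_iff.2 fun p _ ↦ one_le_distortion p) fun c (hc : 1 ≤ c) ↦ ?_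
  refine ⟨_, ⟨?_, ?_⟩, distortion_lineMap hc⟩ <;> simp [AffineMap.lineMap_apply] <;> linarith

end Distortion

section ExtendedPsi

/-- The function `ψ̂` of the principal invariants `p = (i₁, i₂)`. -/
noncomputable def extendedPsi (k : ℝ) (p : ℝ × ℝ) : ℝ :=
  if 0 ≤ p.1 ^ 2 - 4 * p.2 then
    exp (k / 2 * log ((p.1 + √(p.1 ^ 2 - 4 * p.2)) / (p.1 - √(p.1 ^ 2 - 4 * p.2))) ^ 2)
  else 1

lemma sq_arcosh_cosh (x : ℝ) : arcosh (cosh x) ^ 2 = x ^ 2 := by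
  rw [← cosh_abs, arcosh_cosh (abs_nonneg x), sq_abs]

lemma cosh_log_add_sqrt_div_sub_sqrt {x y : ℝ} (hy : 0 < y) (h : 0 ≤ x ^ 2 - 4 * y) :
    cosh (log ((x + √(x ^ 2 - 4 * y)) / (x - √(x ^ 2 - 4 * y)))) = x ^ 2 / y / 2 - 1 := by
  have hsq := sq_sqrt h
  set s := √(x ^ 2 - 4 * y)
  have hprod : (x + s) * (x - s) = 4 * y := by linear_combination -hsq
  have hprod_pos : 0 < (x + s) * (x - s) := by linarith
  have hne : (x + s) ≠ 0 ∧ (x - s) ≠ 0 := mul_ne_zero_iff.1 hprod_pos.ne'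
  rw [cosh_log (div_pos_iff.2 (mul_pos_iff.1 hprod_pos)), inv_div, div_add_div _ _ hne.2 hne.1,
    mul_comm (x - s) (x + s), hprod]
  field_simp
  linear_combination 2 * hsq

lemma extendedPsi_eq_expSqArcosh_distortion (k : ℝ) {p : ℝ × ℝ} (hp : 0 < p.2) :
    extendedPsi k p = expSqArcosh k (distortion p) := by
  have hle : 1 ≤ p.1 ^ 2 / p.2 / 2 - 1 ↔ 0 ≤ p.1 ^ 2 - 4 * p.2 := by
    rw [le_sub_iff_add_le, le_div_iff₀ two_pos, le_div_iff₀ hp, sub_nonneg]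
    norm_num
  rw [extendedPsi, distortion, expSqArcosh]
  split_ifs with h
  · rw [max_eq_left (hle.2 h), ← cosh_log_add_sqrt_div_sub_sqrt hp h, sq_arcosh_cosh]
  · rw [max_eq_right (not_le.1 (mt hle.1 h)).le]
    simp

lemma convexOn_extendedPsi_iff_convexOn_expSqArcosh {k : ℝ} (hk : 0 ≤ k) :
    ConvexOn ℝ (Ici 0 ×ˢ Ioi 0) (extendedPsi k) ↔ ConvexOn ℝ (Ici 1) (expSqArcosh k) := by
  have heq : EqOn (extendedPsi k) (expSqArcosh k ∘ distortion) (Ici 0 ×ˢ Ioi 0) :=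
    fun p hp ↦ extendedPsi_eq_expSqArcosh_distortion k hp.2
  refine ⟨fun h ↦ ?_, fun h ↦ ?_⟩
  · have hdiag : Ici (1 : ℝ) ⊆
        AffineMap.lineMap ((2, 2) : ℝ × ℝ) (4, 4) ⁻¹' (Ici 0 ×ˢ Ioi 0) := by
      intro c (hc : 1 ≤ c)
      constructor <;> simp [AffineMap.lineMap_apply] <;> linarith
    refine (((h.congr heq).comp_affineMap _).subset hdiag (convex_Ici 1)).congr fun c hc ↦ ?_
    simp only [Function.comp_apply, distortion_lineMap hc]
  · have hconv : ConvexOn ℝ (Ici 0 ×ˢ Ioi 0) distortion :=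
      convexOn_distortion.subset (prod_mono_left (subset_univ _))
        ((convex_Ici 0).prod (convex_Ioi 0))
    rw [← image_distortion] at h
    exact (h.comp hconv (image_distortion ▸ monotoneOn_expSqArcosh hk)).congr heq.symm

end ExtendedPsi

theorem extended_psi_convex_iff (k : ℝ) (hk : 0 < k) :
    ConvexOn ℝ (Set.Ici (0:ℝ) ×ˢ Set.Ioi (0:ℝ))
      (fun p : ℝ × ℝ =>
        if 0 ≤ p.1 ^ 2 - 4 * p.2 then
          Real.exp ((k / 2) *
            (Real.log ((p.1 + Real.sqrt (p.1 ^ 2 - 4 * p.2)) /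
              (p.1 - Real.sqrt (p.1 ^ 2 - 4 * p.2)))) ^ 2)
        else 1) ↔ k ≥ 1 / 3 :=
  (convexOn_extendedPsi_iff_convexOn_expSqArcosh hk.le).trans (convexOn_expSqArcosh_iff hk)
end

section
/- Let k ≥ 0 and let λ1, λ2, λ3, μ1, μ2, μ3 be positive real numbers such that λ1+λ2+λ3 ≤ μ1+μ2+μ3, λ1λ2+λ1λ3+λ2λ3 ≤ μ1μ2+μ1μ3+μ2μ3, and λ1λ2λ3 = μ1μ2μ3. Then exp(k·((log λ1)²+(log λ2)²+(log λ3)² − (1/3)·(log(λ1λ2λ3))²)) ≤ exp(k·((log μ1)²+(log μ2)²+(log μ3)² − (1/3)·(log(μ1μ2μ3))²)). -/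
/-!
The function `D x = ∫₀ˣ log (1 + v) / v dv = -Li₂(-x)` satisfies the inversion formula
`D x + D x⁻¹ = (log x)² / 2 + 2 D 1`, so a sum of squared logarithms is, up to a constant, a sum
of values of `D` at the points and at their inverses. Rescaling gives
`∑ᵢ D (xᵢ) = ∫₀¹ log (∏ᵢ (1 + xᵢ u)) / u du`, which is monotone in the generating polynomial
`∏ᵢ (1 + xᵢ u)` of the elementary symmetric functions. Inverting all the points at fixed product
reverses the coefficients of this polynomial, up to a common factor.
-/

open MeasureTheory Set Finset

/-- The function `x ↦ -Li₂(-x)`, where `Li₂` is the dilogarithm. The value of the integrand at `0`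
is the junk value `0` instead of the limit `1`, which does not affect the integral. -/
noncomputable def negDilogNeg (x : ℝ) : ℝ :=
  ∫ v in (0 : ℝ)..x, Real.log (1 + v) / v

lemma intervalIntegrable_log_one_add_mul_div {x a : ℝ} (hx : 0 ≤ x) (ha : 0 ≤ a) :
    IntervalIntegrable (fun u ↦ Real.log (1 + x * u) / u) volume 0 a := by
  have hmeas : Measurable fun u : ℝ ↦ Real.log (1 + x * u) / u := by fun_prop
  refine (intervalIntegrable_const (c := x)).mono_fun' hmeas.aestronglyMeasurable ?_
  filter_upwards [ae_restrict_mem measurableSet_uIoc] with u hu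
  have hu0 : 0 < u := (uIoc_of_le ha ▸ hu).1
  have hxu : 0 ≤ x * u := by positivity
  have hlog_nonneg : 0 ≤ Real.log (1 + x * u) := Real.log_nonneg (by linarith)
  have hlog_le : Real.log (1 + x * u) ≤ x * u := by
    linarith [Real.log_le_sub_one_of_pos (by linarith : 0 < 1 + x * u)]
  rwa [Real.norm_of_nonneg (by positivity), div_le_iff₀ hu0]

lemma negDilogNeg_eq_integral_zero_one (x : ℝ) :
    negDilogNeg x = ∫ u in (0 : ℝ)..1, Real.log (1 + x * u) / u := by
  rcases eq_or_ne x 0 with rfl | hx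
  · simp [negDilogNeg]
  calc negDilogNeg x
      = x * ∫ u in (0 : ℝ)..1, Real.log (1 + x * u) / (x * u) := by
        simpa [negDilogNeg] using
          (intervalIntegral.mul_integral_comp_mul_left
            (f := fun v ↦ Real.log (1 + v) / v) (a := 0) (b := 1) x).symm
    _ = ∫ u in (0 : ℝ)..1, Real.log (1 + x * u) / u := by
        rw [← intervalIntegral.integral_const_mul]
        congr 1 with u
        rw [mul_comm x u, ← div_div, mul_div_cancel₀ _ hx]

lemma hasDerivAt_negDilogNeg {x : ℝ} (hx : 0 < x) :
    HasDerivAt negDilogNeg (Real.log (1 + x) / x) x := by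
  have hmeas : Measurable fun v : ℝ ↦ Real.log (1 + v) / v := by fun_prop
  refine intervalIntegral.integral_hasDerivAt_right ?_
    hmeas.stronglyMeasurable.stronglyMeasurableAtFilter ?_
  · simpa using intervalIntegrable_log_one_add_mul_div zero_le_one hx.le
  · have hx1 : 1 + x ≠ 0 := by positivity
    fun_prop (disch := first | assumption | exact hx.ne')

lemma hasDerivAt_negDilogNeg_add_negDilogNeg_inv {x : ℝ} (hx : 0 < x) :
    HasDerivAt (fun t ↦ negDilogNeg t + negDilogNeg t⁻¹) (Real.log x / x) x := by
  have hlog : Real.log (1 + x⁻¹) = Real.log (1 + x) - Real.log x := by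
    rw [← Real.log_div (by positivity) hx.ne']
    congr 1
    field_simp
    ring
  refine ((hasDerivAt_negDilogNeg hx).fun_add
    ((hasDerivAt_negDilogNeg (inv_pos.2 hx)).comp x (hasDerivAt_inv hx.ne'))).congr_deriv ?_
  rw [hlog]
  field_simp
  ring

theorem negDilogNeg_add_negDilogNeg_inv {x : ℝ} (hx : 0 < x) :
    negDilogNeg x + negDilogNeg x⁻¹ = Real.log x ^ 2 / 2 + 2 * negDilogNeg 1 := by
  have hderiv {t : ℝ} (ht : 0 < t) :
      HasDerivAt (fun t ↦ Real.log t ^ 2 / 2 + 2 * negDilogNeg 1) (Real.log t / t) t := by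
    refine ((((Real.hasDerivAt_log ht.ne').fun_pow 2).div_const 2).add_const
      (2 * negDilogNeg 1)).congr_deriv ?_
    ring
  refine isOpen_Ioi.eqOn_of_deriv_eq isPreconnected_Ioi
    (f := fun t ↦ negDilogNeg t + negDilogNeg t⁻¹)
    (fun t ht ↦ (hasDerivAt_negDilogNeg_add_negDilogNeg_inv ht).differentiableAt
      |>.differentiableWithinAt)
    (fun t ht ↦ (hderiv ht).differentiableAt.differentiableWithinAt)
    (fun t ht ↦ (hasDerivAt_negDilogNeg_add_negDilogNeg_inv ht).deriv.trans (hderiv ht).deriv.symm)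
    (mem_Ioi.2 one_pos) ?_ hx
  simp [two_mul]

section

variable {ι : Type*} {s : Finset ι} {x y : ι → ℝ}

lemma sum_negDilogNeg_eq_integral (hx : ∀ i ∈ s, 0 ≤ x i) :
    ∑ i ∈ s, negDilogNeg (x i) =
      ∫ u in (0 : ℝ)..1, ∑ i ∈ s, Real.log (1 + x i * u) / u := by
  simp_rw [negDilogNeg_eq_integral_zero_one]
  exact (intervalIntegral.integral_finsetSum fun i hi ↦
    intervalIntegrable_log_one_add_mul_div (hx i hi) zero_le_one).symm

lemma sum_negDilogNeg_le_sum_negDilogNeg (hx : ∀ i ∈ s, 0 ≤ x i) (hy : ∀ i ∈ s, 0 ≤ y i)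
    (hxy : ∀ u ∈ Ioo (0 : ℝ) 1, ∏ i ∈ s, (1 + x i * u) ≤ ∏ i ∈ s, (1 + y i * u)) :
    ∑ i ∈ s, negDilogNeg (x i) ≤ ∑ i ∈ s, negDilogNeg (y i) := by
  have hint {z : ι → ℝ} (hz : ∀ i ∈ s, 0 ≤ z i) :
      IntervalIntegrable (fun u ↦ ∑ i ∈ s, Real.log (1 + z i * u) / u) volume 0 1 := by
    simpa only [Finset.sum_fn] using IntervalIntegrable.sum s fun i hi ↦
      intervalIntegrable_log_one_add_mul_div (hz i hi) zero_le_one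
  rw [sum_negDilogNeg_eq_integral hx, sum_negDilogNeg_eq_integral hy]
  refine intervalIntegral.integral_mono_on_of_le_Ioo zero_le_one (hint hx) (hint hy) fun u hu ↦ ?_
  have hpos {z : ι → ℝ} (hz : ∀ i ∈ s, 0 ≤ z i) : ∀ i ∈ s, 0 < 1 + z i * u := fun i hi ↦
    add_pos_of_pos_of_nonneg one_pos (mul_nonneg (hz i hi) hu.1.le)
  rw [← sum_div, ← sum_div, ← Real.log_prod fun i hi ↦ (hpos hx i hi).ne',
    ← Real.log_prod fun i hi ↦ (hpos hy i hi).ne']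
  exact div_le_div_of_nonneg_right (Real.log_le_log (prod_pos (hpos hx)) (hxy u hu)) hu.1.le

lemma prod_one_add_inv_mul {K : Type*} [Field K] {z : ι → K} (hz : ∀ i ∈ s, z i ≠ 0)
    {u : K} (hu : u ≠ 0) :
    ∏ i ∈ s, (1 + (z i)⁻¹ * u) = u ^ #s / (∏ i ∈ s, z i) * ∏ i ∈ s, (1 + z i * u⁻¹) := by
  rw [← prod_const, ← prod_div_distrib, ← prod_mul_distrib]
  refine prod_congr rfl fun i hi ↦ ?_
  have hzi := hz i hi
  field_simp
  ring

theorem sum_log_sq_le_sum_log_sq (hx : ∀ i ∈ s, 0 < x i) (hy : ∀ i ∈ s, 0 < y i)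
    (hxy : ∀ u > 0, ∏ i ∈ s, (1 + x i * u) ≤ ∏ i ∈ s, (1 + y i * u))
    (hprod : ∏ i ∈ s, x i = ∏ i ∈ s, y i) :
    ∑ i ∈ s, Real.log (x i) ^ 2 ≤ ∑ i ∈ s, Real.log (y i) ^ 2 := by
  have hsum : ∑ i ∈ s, negDilogNeg (x i) ≤ ∑ i ∈ s, negDilogNeg (y i) :=
    sum_negDilogNeg_le_sum_negDilogNeg (fun i hi ↦ (hx i hi).le) (fun i hi ↦ (hy i hi).le)
      fun u hu ↦ hxy u hu.1
  have hsum_inv : ∑ i ∈ s, negDilogNeg (x i)⁻¹ ≤ ∑ i ∈ s, negDilogNeg (y i)⁻¹ := by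
    refine sum_negDilogNeg_le_sum_negDilogNeg (fun i hi ↦ (inv_pos.2 (hx i hi)).le)
      (fun i hi ↦ (inv_pos.2 (hy i hi)).le) fun u hu ↦ ?_
    rw [prod_one_add_inv_mul (fun i hi ↦ (hx i hi).ne') hu.1.ne',
      prod_one_add_inv_mul (fun i hi ↦ (hy i hi).ne') hu.1.ne', hprod]
    exact mul_le_mul_of_nonneg_left (hxy u⁻¹ (inv_pos.2 hu.1))
      (div_nonneg (pow_nonneg hu.1.le _) (prod_pos hy).le)
  have hlog {z : ι → ℝ} (hz : ∀ i ∈ s, 0 < z i) :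
      ∑ i ∈ s, negDilogNeg (z i) + ∑ i ∈ s, negDilogNeg (z i)⁻¹ =
        (∑ i ∈ s, Real.log (z i) ^ 2) / 2 + #s * (2 * negDilogNeg 1) := by
    rw [← sum_add_distrib, sum_congr rfl fun i hi ↦ negDilogNeg_add_negDilogNeg_inv (hz i hi),
      sum_add_distrib, sum_div, sum_const, nsmul_eq_mul]
  linarith [hlog hx, hlog hy]

end

theorem exp_dev3_hencky_monotone
    (k l1 l2 l3 m1 m2 m3 : ℝ) (hk : 0 ≤ k)
    (hl1 : 0 < l1) (hl2 : 0 < l2) (hl3 : 0 < l3)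
    (hm1 : 0 < m1) (hm2 : 0 < m2) (hm3 : 0 < m3)
    (h1 : l1 + l2 + l3 ≤ m1 + m2 + m3)
    (h2 : l1 * l2 + l1 * l3 + l2 * l3 ≤ m1 * m2 + m1 * m3 + m2 * m3)
    (h3 : l1 * l2 * l3 = m1 * m2 * m3) :
    Real.exp (k * ((Real.log l1) ^ 2 + (Real.log l2) ^ 2 + (Real.log l3) ^ 2 -
        (1 / 3) * (Real.log (l1 * l2 * l3)) ^ 2)) ≤
      Real.exp (k * ((Real.log m1) ^ 2 + (Real.log m2) ^ 2 + (Real.log m3) ^ 2 -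
        (1 / 3) * (Real.log (m1 * m2 * m3)) ^ 2)) := by
  have hpoly (a b c u : ℝ) : (1 + a * u) * (1 + b * u) * (1 + c * u) =
      1 + (a + b + c) * u + (a * b + a * c + b * c) * u ^ 2 + a * b * c * u ^ 3 := by ring
  have hlog : ∑ i, Real.log (![l1, l2, l3] i) ^ 2 ≤ ∑ i, Real.log (![m1, m2, m3] i) ^ 2 := by
    refine sum_log_sq_le_sum_log_sq (by simp [Fin.forall_fin_succ, *])
      (by simp [Fin.forall_fin_succ, *]) (fun u hu ↦ ?_) (by simpa [Fin.prod_univ_three] using h3)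
    suffices (1 + l1 * u) * (1 + l2 * u) * (1 + l3 * u) ≤
        (1 + m1 * u) * (1 + m2 * u) * (1 + m3 * u) by simpa [Fin.prod_univ_three] using this
    rw [hpoly, hpoly, h3]
    gcongr
  simp only [Fin.sum_univ_three, Matrix.cons_val] at hlog
  rw [h3]
  gcongr
end

section
/- Let k̂ > 0. The function t ↦ exp(k̂·(log t)²) is convex on (0,∞) if and only if k̂ ≥ 1/8. -/
/-!
In the variable `s = log t` a function `t ↦ φ (log t)` has second derivative
`(φ'' s - φ' s) / t ^ 2`, so it is convex on `(0, ∞)` exactly when `φ' ≤ φ''` on all of `ℝ`. For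
`φ = exp ∘ g` this reads `g' ≤ g'' + g' ^ 2`. If `g` is a quadratic polynomial with leading
coefficient `a ≠ 0`, then `g'' = 2 * a` is constant while `u = g'` takes every real value, so the
condition is `u - u ^ 2 ≤ 2 * a` for all `u`, that is `1 / 4 ≤ 2 * a`.
-/

open Set

theorem convexOn_iff_hasDerivAt2_nonneg {D : Set ℝ} {f f' f'' : ℝ → ℝ} (hD : Convex ℝ D)
    (hf : ContinuousOn f D) (hf' : ∀ x ∈ interior D, HasDerivAt f (f' x) x)
    (hf'' : ∀ x ∈ interior D, HasDerivAt f' (f'' x) x) :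
    ConvexOn ℝ D f ↔ ∀ x ∈ interior D, 0 ≤ f'' x := by
  refine ⟨fun hconv x hx ↦ ?_, convexOn_of_hasDerivWithinAt2_nonneg hD hf
    (fun x hx ↦ (hf' x hx).hasDerivWithinAt) (fun x hx ↦ (hf'' x hx).hasDerivWithinAt)⟩
  have hmono : MonotoneOn f' (interior D) :=
    ((hconv.subset interior_subset hD.interior).monotoneOn_deriv
      fun y hy ↦ (hf' y hy).differentiableAt).congr fun y hy ↦ (hf' y hy).deriv
  rw [← (hf'' x hx).deriv, ← derivWithin_of_isOpen isOpen_interior hx]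
  exact hmono.derivWithin_nonneg

section CompLog

variable {φ φ' φ'' : ℝ → ℝ}

theorem hasDerivAt_comp_log {φ₁ t : ℝ} (hφ : HasDerivAt φ φ₁ (Real.log t)) (ht : t ≠ 0) :
    HasDerivAt (fun t ↦ φ (Real.log t)) (φ₁ / t) t :=
  hφ.comp t (Real.hasDerivAt_log ht)

theorem hasDerivAt_comp_log_div {φ₁ t : ℝ} (hφ : HasDerivAt φ φ₁ (Real.log t)) (ht : t ≠ 0) :
    HasDerivAt (fun t ↦ φ (Real.log t) / t) ((φ₁ - φ (Real.log t)) / t ^ 2) t :=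
  ((hasDerivAt_comp_log hφ ht).fun_div (hasDerivAt_id' t) ht).congr_deriv <| by
    rw [div_mul_cancel₀ _ ht, mul_one]

theorem convexOn_comp_log_iff (hφ : ∀ s, HasDerivAt φ (φ' s) s)
    (hφ' : ∀ s, HasDerivAt φ' (φ'' s) s) :
    ConvexOn ℝ (Ioi 0) (fun t ↦ φ (Real.log t)) ↔ ∀ s, φ' s ≤ φ'' s := by
  have hderiv : ∀ t ∈ Ioi (0 : ℝ), HasDerivAt (fun t ↦ φ (Real.log t)) (φ' (Real.log t) / t) t :=
    fun t ht ↦ hasDerivAt_comp_log (hφ _) ht.ne'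
  have hderiv2 : ∀ t ∈ Ioi (0 : ℝ), HasDerivAt (fun t ↦ φ' (Real.log t) / t)
      ((φ'' (Real.log t) - φ' (Real.log t)) / t ^ 2) t :=
    fun t ht ↦ hasDerivAt_comp_log_div (hφ' _) ht.ne'
  have hcont : ContinuousOn (fun t ↦ φ (Real.log t)) (Ioi 0) := HasDerivAt.continuousOn hderiv
  rw [← interior_Ioi] at hderiv hderiv2
  rw [convexOn_iff_hasDerivAt2_nonneg (convex_Ioi 0) hcont hderiv hderiv2, interior_Ioi]
  constructor
  · intro h s
    have hs := h (Real.exp s) (Real.exp_pos s)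
    rwa [Real.log_exp, le_div_iff₀ (by positivity), zero_mul, sub_nonneg] at hs
  · exact fun h t _ ↦ div_nonneg (sub_nonneg.2 (h _)) (sq_nonneg t)

end CompLog

theorem convexOn_exp_comp_log_iff {g g' g'' : ℝ → ℝ} (hg : ∀ s, HasDerivAt g (g' s) s)
    (hg' : ∀ s, HasDerivAt g' (g'' s) s) :
    ConvexOn ℝ (Ioi 0) (fun t ↦ Real.exp (g (Real.log t))) ↔
      ∀ s, g' s ≤ g'' s + g' s ^ 2 := by
  have hexp : ∀ s, HasDerivAt (fun s ↦ Real.exp (g s)) (Real.exp (g s) * g' s) s :=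
    fun s ↦ (hg s).exp
  have hexp' : ∀ s, HasDerivAt (fun s ↦ Real.exp (g s) * g' s)
      (Real.exp (g s) * (g'' s + g' s ^ 2)) s :=
    fun s ↦ ((hexp s).fun_mul (hg' s)).congr_deriv (by ring)
  rw [convexOn_comp_log_iff hexp hexp']
  exact forall_congr' fun s ↦ mul_le_mul_iff_right₀ (Real.exp_pos _)

theorem forall_le_add_sq_iff {K : Type*} [Field K] [LinearOrder K] [IsStrictOrderedRing K]
    {c : K} : (∀ u : K, u ≤ c + u ^ 2) ↔ 1 / 4 ≤ c := by
  constructor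
  · intro h
    linarith [h (1 / 2)]
  · intro hc u
    linarith [sq_nonneg (u - 1 / 2)]

theorem volumetric_exp_convex_iff_general {a : ℝ} (ha : a ≠ 0) (b c : ℝ) :
    ConvexOn ℝ (Ioi 0) (fun t ↦ Real.exp (a * Real.log t ^ 2 + b * Real.log t + c)) ↔
      1 / 8 ≤ a := by
  have hg (s : ℝ) : HasDerivAt (fun s ↦ a * s ^ 2 + b * s + c) (2 * a * s + b) s :=
    ((((hasDerivAt_pow 2 s).const_mul a).fun_add ((hasDerivAt_id' s).const_mul b)).add_const
      c).congr_deriv (by ring)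
  have hg' (s : ℝ) : HasDerivAt (fun s ↦ 2 * a * s + b) (2 * a) s := by
    simpa using ((hasDerivAt_id' s).const_mul (2 * a)).add_const b
  have hsurj : Function.Surjective fun s : ℝ ↦ 2 * a * s + b :=
    (add_right_surjective b).comp (mul_left_surjective₀ (mul_ne_zero two_ne_zero ha))
  calc
    _ ↔ ∀ s, 2 * a * s + b ≤ 2 * a + (2 * a * s + b) ^ 2 := convexOn_exp_comp_log_iff hg hg'
    _ ↔ ∀ u, u ≤ 2 * a + u ^ 2 := (hsurj.forall (p := fun u ↦ u ≤ 2 * a + u ^ 2)).symm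
    _ ↔ 1 / 4 ≤ 2 * a := forall_le_add_sq_iff
    _ ↔ 1 / 8 ≤ a := by constructor <;> intro <;> linarith

theorem volumetric_exp_convex_iff (khat : ℝ) (h : 0 < khat) :
    ConvexOn ℝ (Set.Ioi (0:ℝ)) (fun t : ℝ => Real.exp (khat * (Real.log t) ^ 2)) ↔
      khat ≥ 1 / 8 := by
  simpa using volumetric_exp_convex_iff_general h.ne' 0 0
end

section
/- For every α > 0 there exists a constant K > 0 such that exp((log t)²) ≥ K·|t − 1|^α for all t > 0. -/
/-!
In the variable `x = log t` we have `|t - 1| = |exp x - 1| ≤ exp |x|`, so `|t - 1| ^ α` grows at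
most like `exp (α * |x|)`, and completing the square absorbs the linear exponent into `k * x ^ 2`,
at the cost of the constant `exp (α ^ 2 / (4 * k))`.
-/

lemma abs_exp_sub_one_le_exp_abs (x : ℝ) : |Real.exp x - 1| ≤ Real.exp |x| := by
  have h_exp : Real.exp x ≤ Real.exp |x| := Real.exp_le_exp.mpr (le_abs_self x)
  have h_one : 1 ≤ Real.exp |x| := Real.one_le_exp (abs_nonneg x)
  exact abs_sub_le_of_nonneg_of_le (Real.exp_nonneg x) h_exp zero_le_one h_one

lemma abs_exp_sub_one_rpow_le_exp_mul_exp_sq {k α : ℝ} (hk : 0 < k) (hα : 0 ≤ α) (x : ℝ) :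
    |Real.exp x - 1| ^ α ≤ Real.exp (α ^ 2 / (4 * k)) * Real.exp (k * x ^ 2) := by
  have h_exponent : α * |x| ≤ α ^ 2 / (4 * k) + k * x ^ 2 :=
    calc α * |x|
        = 2 * |x| * (α / 2) := by ring
      _ ≤ k * |x| ^ 2 + k⁻¹ * (α / 2) ^ 2 := two_mul_le_add_mul_sq hk
      _ = α ^ 2 / (4 * k) + k * x ^ 2 := by rw [sq_abs]; ring
  calc |Real.exp x - 1| ^ α
      ≤ Real.exp |x| ^ α :=
        Real.rpow_le_rpow (abs_nonneg _) (abs_exp_sub_one_le_exp_abs x) hα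
    _ = Real.exp (α * |x|) := by rw [← Real.exp_mul, mul_comm]
    _ ≤ Real.exp (α ^ 2 / (4 * k) + k * x ^ 2) := Real.exp_le_exp.mpr h_exponent
    _ = Real.exp (α ^ 2 / (4 * k)) * Real.exp (k * x ^ 2) := Real.exp_add _ _

theorem unconditional_coercivity_1D (α : ℝ) (hα : 0 < α) :
    ∃ K : ℝ, 0 < K ∧ ∀ t : ℝ, 0 < t →
      Real.exp ((Real.log t) ^ 2) ≥ K * |t - 1| ^ α := by
  refine ⟨(Real.exp (α ^ 2 / (4 * 1)))⁻¹, by positivity, fun t ht => ?_⟩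
  have h_bound := abs_exp_sub_one_rpow_le_exp_mul_exp_sq one_pos hα.le (Real.log t)
  rw [Real.exp_log ht, one_mul] at h_bound
  exact inv_mul_le_of_le_mul₀ (by positivity) (by positivity) h_bound
end

section
/- Let α, β > 0. Then there exist constants K1, K2 > 0 such that for all λ1, λ2 > 0 one has exp(β·((log λ1)² + (log λ2)²)) ≥ K1·((λ1−1)² + (λ2−1)²)^{αβ/2} − K2. -/
/-!
Let `r` be the Euclidean norm of the vector of logarithms `log λᵢ`. Each coordinate satisfies
`|λᵢ - 1| ≤ exp |log λᵢ| ≤ exp r`, so the power `α * β` of the Euclidean norm of `(λᵢ - 1)ᵢ` is at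
most a constant times `exp (α * β * r)`. Expanding `0 ≤ β * (r - α / 2) ^ 2` bounds the exponent
`α * β * r` by `β * r ^ 2 + α ^ 2 * β / 4`.
-/

open Finset

theorem abs_sub_one_le_exp_abs_log {x : ℝ} (hx : 0 < x) : |x - 1| ≤ Real.exp |Real.log x| := by
  have x_le : x ≤ Real.exp |Real.log x| := (Real.log_le_iff_le_exp hx).1 (le_abs_self _)
  have one_le : 1 ≤ Real.exp |Real.log x| := Real.one_le_exp (abs_nonneg _)
  exact abs_le.2 ⟨by linarith, by linarith⟩

section PositiveFamily

variable {ι : Type*} {s : Finset ι} {l : ι → ℝ}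

theorem sum_sub_one_sq_le_card_mul_exp (hl : ∀ i ∈ s, 0 < l i) :
    ∑ i ∈ s, (l i - 1) ^ 2 ≤ #s * Real.exp (2 * √(∑ i ∈ s, Real.log (l i) ^ 2)) := by
  rw [← nsmul_eq_mul]
  refine sum_le_card_nsmul s _ _ fun i hi ↦ ?_
  have abs_log_le : |Real.log (l i)| ≤ √(∑ j ∈ s, Real.log (l j) ^ 2) :=
    Real.abs_le_sqrt (single_le_sum (fun j _ ↦ sq_nonneg (Real.log (l j))) hi)
  calc (l i - 1) ^ 2 = |l i - 1| ^ 2 := (sq_abs _).symm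
    _ ≤ Real.exp |Real.log (l i)| ^ 2 := by gcongr; exact abs_sub_one_le_exp_abs_log (hl i hi)
    _ = Real.exp (2 * |Real.log (l i)|) := (Real.exp_nat_mul _ 2).symm
    _ ≤ Real.exp (2 * √(∑ j ∈ s, Real.log (l j) ^ 2)) := by gcongr

theorem coercivity_2D_general {α β : ℝ} (hα : 0 ≤ α) (hβ : 0 ≤ β) (hl : ∀ i ∈ s, 0 < l i) :
    (∑ i ∈ s, (l i - 1) ^ 2) ^ (α * β / 2) ≤
      (#s : ℝ) ^ (α * β / 2) * Real.exp (α ^ 2 * β / 4) *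
        Real.exp (β * ∑ i ∈ s, Real.log (l i) ^ 2) := by
  set S := ∑ i ∈ s, Real.log (l i) ^ 2
  have sq_sqrt_S : √S ^ 2 = S := Real.sq_sqrt (sum_nonneg fun i _ ↦ sq_nonneg _)
  have exponent_le : 2 * √S * (α * β / 2) ≤ α ^ 2 * β / 4 + β * S := by
    linear_combination mul_nonneg hβ (sq_nonneg (√S - α / 2)) + β * sq_sqrt_S
  calc (∑ i ∈ s, (l i - 1) ^ 2) ^ (α * β / 2)
      ≤ (#s * Real.exp (2 * √S)) ^ (α * β / 2) := by
        gcongr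
        exact sum_sub_one_sq_le_card_mul_exp hl
    _ = (#s : ℝ) ^ (α * β / 2) * Real.exp (2 * √S * (α * β / 2)) := by
        rw [Real.mul_rpow (Nat.cast_nonneg _) (Real.exp_nonneg _), ← Real.exp_mul]
    _ ≤ (#s : ℝ) ^ (α * β / 2) * Real.exp (α ^ 2 * β / 4 + β * S) := by gcongr
    _ = (#s : ℝ) ^ (α * β / 2) * Real.exp (α ^ 2 * β / 4) * Real.exp (β * S) := by
        rw [Real.exp_add, mul_assoc]

end PositiveFamily

theorem coercivity_2D (α β : ℝ) (hα : 0 < α) (hβ : 0 < β) :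
    ∃ K1 K2 : ℝ, 0 < K1 ∧ 0 < K2 ∧ ∀ l1 l2 : ℝ, 0 < l1 → 0 < l2 →
      Real.exp (β * ((Real.log l1) ^ 2 + (Real.log l2) ^ 2)) ≥
        K1 * ((l1 - 1) ^ 2 + (l2 - 1) ^ 2) ^ (α * β / 2) - K2 := by
  refine ⟨((2 : ℝ) ^ (α * β / 2) * Real.exp (α ^ 2 * β / 4))⁻¹, 1, by positivity, one_pos,
    fun l1 l2 h1 h2 ↦ (sub_le_self _ zero_le_one).trans ((inv_mul_le_iff₀ (by positivity)).2 ?_)⟩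
  simpa using coercivity_2D_general (s := univ) (l := ![l1, l2]) hα.le hβ.le (by simp [h1, h2])
end

section
/- Let k > 0. There do not exist constants K1, K2, α > 0 such that exp((k/2)·(log(λ1/λ2))²) ≥ K1·((λ1−1)² + (λ2−1)²)^{αk/2} − K2 for all λ1, λ2 > 0. -/
/-!
An isochoric energy is blind to volume change, so it is constant along the conformal stretches
`U = t • 1`. Along these `‖U - 1‖² = n * (t - 1) ^ 2` takes every nonnegative value, so no
function of `‖U - 1‖` that is unbounded above can bound the energy from below.
-/

open Set

section Isochoric

variable {ι : Type*}

/-- An energy `W`, given as a function of the principal stretches, is isochoric if it does not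
change under a positive rescaling of all of them. Nothing is asked at nonpositive stretches, where
the value of `W` has no physical meaning. -/
def IsIsochoric (W : (ι → ℝ) → ℝ) : Prop :=
  ∀ ⦃c : ℝ⦄, 0 < c → ∀ ⦃l : ι → ℝ⦄, (∀ i, 0 < l i) → W (c • l) = W l

theorem isIsochoric_comp_div (f : ℝ → ℝ) (i j : ι) :
    IsIsochoric fun l : ι → ℝ => f (l i / l j) := by
  intro c hc l _
  simp only [Pi.smul_apply, smul_eq_mul, mul_div_mul_left _ _ hc.ne']

theorem IsIsochoric.apply_const {W : (ι → ℝ) → ℝ} (hW : IsIsochoric W) {t : ℝ} (ht : 0 < t) :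
    W (fun _ => t) = W 1 := by
  have h_smul : (fun _ => t) = t • (1 : ι → ℝ) := by
    ext
    simp only [Pi.smul_apply, Pi.one_apply, smul_eq_mul, mul_one]
  rw [h_smul]
  exact hW ht fun _ => one_pos

theorem exists_pos_sum_const_sub_one_sq_eq [Fintype ι] [Nonempty ι] {y : ℝ} (hy : 0 ≤ y) :
    ∃ t : ℝ, 0 < t ∧ ∑ _i : ι, (t - 1) ^ 2 = y := by
  refine ⟨1 + √(y / Fintype.card ι), by positivity, ?_⟩
  rw [add_sub_cancel_left, Real.sq_sqrt (by positivity), Finset.sum_const, Finset.card_univ,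
    nsmul_eq_mul, mul_div_cancel₀ _ (Nat.cast_ne_zero.2 Fintype.card_ne_zero)]

theorem isochoric_not_coercive_U_general [Fintype ι] [Nonempty ι] {W : (ι → ℝ) → ℝ}
    (hW : IsIsochoric W) {φ : ℝ → ℝ} (hφ : ¬ BddAbove (φ '' Ici 0)) :
    ¬ ∃ K1 K2 : ℝ, 0 < K1 ∧
      ∀ l : ι → ℝ, (∀ i, 0 < l i) → W l ≥ K1 * φ (∑ i, (l i - 1) ^ 2) - K2 := by
  rintro ⟨K1, K2, hK1, h_coercive⟩
  refine hφ ⟨(W 1 + K2) / K1, forall_mem_image.2 fun y hy => ?_⟩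
  obtain ⟨t, ht, rfl⟩ := exists_pos_sum_const_sub_one_sq_eq (ι := ι) hy
  have h_conformal := h_coercive (fun _ => t) fun _ => ht
  rw [hW.apply_const ht] at h_conformal
  rw [le_div_iff₀' hK1]
  linarith

end Isochoric

theorem not_bddAbove_image_rpow_Ici {p : ℝ} (hp : p ≠ 0) :
    ¬ BddAbove ((fun x : ℝ => x ^ p) '' Ici 0) := by
  have h_surj : Ici 0 ⊆ (fun x : ℝ => x ^ p) '' Ici 0 := fun y hy =>
    ⟨y ^ p⁻¹, Real.rpow_nonneg hy _, Real.rpow_inv_rpow hy hp⟩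
  exact fun h => not_bddAbove_Ici 0 (h.mono h_surj)

theorem isochoric_not_coercive_U (k : ℝ) (hk : 0 < k) :
    ¬ ∃ K1 K2 α : ℝ, 0 < K1 ∧ 0 < K2 ∧ 0 < α ∧
      ∀ l1 l2 : ℝ, 0 < l1 → 0 < l2 →
        Real.exp ((k / 2) * (Real.log (l1 / l2)) ^ 2) ≥
          K1 * ((l1 - 1) ^ 2 + (l2 - 1) ^ 2) ^ (α * k / 2) - K2 := by
  rintro ⟨K1, K2, α, hK1, -, hα, h_coercive⟩
  have h_exponent : α * k / 2 ≠ 0 := by positivity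
  refine isochoric_not_coercive_U_general
    (isIsochoric_comp_div (fun r => Real.exp (k / 2 * Real.log r ^ 2)) (0 : Fin 2) 1)
    (not_bddAbove_image_rpow_Ici h_exponent) ⟨K1, K2, hK1, fun l hl => ?_⟩
  simpa only [Fin.sum_univ_two] using h_coercive (l 0) (l 1) (hl 0) (hl 1)
end

section
/- Let k > 0. There do not exist constants K1, K2, α > 0 such that exp((k/2)·(log(λ1/λ2))²) ≥ K1·(|λ1 − λ2|/√2)^{αk} − K2 for all λ1, λ2 > 0. -/
/-!
Scaling both eigenvalues by `t` leaves an energy that depends only on their ratio unchanged, but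
multiplies `‖dev₂ U‖` by `t`. Hence no function of `‖dev₂ U‖` that tends to infinity, such as
`s ↦ K1 * s ^ (α * k) - K2`, can bound such an energy from below: it fails along every ray of
stretches that are not multiples of the identity.
-/

open Filter

theorem exists_pos_lt_comp_of_smul_invariant {𝕜 E β : Type*} [Semifield 𝕜] [LinearOrder 𝕜]
    [IsStrictOrderedRing 𝕜] [SMul 𝕜 E] [Preorder β] [NoMaxOrder β] {W : E → β} {N : E → 𝕜}
    {φ : 𝕜 → β} {x : E} (hφ : Tendsto φ atTop atTop) (hW : ∀ t : 𝕜, 0 < t → W (t • x) = W x)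
    (hN : ∀ t : 𝕜, 0 < t → N (t • x) = t * N x) (hx : 0 < N x) :
    ∃ t : 𝕜, 0 < t ∧ W (t • x) < φ (N (t • x)) := by
  have hφN : Tendsto (fun t ↦ φ (t * N x)) atTop atTop :=
    hφ.comp (tendsto_id.atTop_mul_const hx)
  obtain ⟨t, ht, hWt⟩ :=
    ((eventually_gt_atTop 0).and (hφN.eventually_gt_atTop (W x))).exists
  exact ⟨t, ht, by rwa [hW t ht, hN t ht]⟩

theorem tendsto_const_mul_rpow_sub_const_atTop {K p : ℝ} (hK : 0 < K) (hp : 0 < p) (C : ℝ) :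
    Tendsto (fun s : ℝ ↦ K * s ^ p - C) atTop atTop :=
  tendsto_atTop_add_const_right _ (-C) ((tendsto_rpow_atTop hp).const_mul_atTop hK)

theorem exists_pos_lt_comp_abs_sub_div_sqrt_two (W : ℝ → ℝ) {φ : ℝ → ℝ}
    (hφ : Tendsto φ atTop atTop) {l1 l2 : ℝ} (hl : l1 ≠ l2) :
    ∃ t : ℝ, 0 < t ∧ W (t * l1 / (t * l2)) < φ (|t * l1 - t * l2| / √2) := by
  refine exists_pos_lt_comp_of_smul_invariant (x := (l1, l2)) (W := fun l ↦ W (l.1 / l.2))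
    (N := fun l ↦ |l.1 - l.2| / √2) hφ (fun t ht ↦ ?ratio_invariant) (fun t ht ↦ ?homogeneous)
    ?dev_pos
  case ratio_invariant => exact congrArg W (mul_div_mul_left l1 l2 ht.ne')
  case homogeneous =>
    calc |t * l1 - t * l2| / √2 = t * |l1 - l2| / √2 := by
          rw [← mul_sub, abs_mul, abs_of_pos ht]
      _ = t * (|l1 - l2| / √2) := mul_div_assoc ..
  case dev_pos => exact div_pos (abs_sub_pos.mpr hl) (by positivity)

theorem isochoric_not_coercive_devU_general (W : ℝ → ℝ) {φ : ℝ → ℝ}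
    (hφ : Tendsto φ atTop atTop) :
    ¬ ∀ l1 l2 : ℝ, 0 < l1 → 0 < l2 → φ (|l1 - l2| / √2) ≤ W (l1 / l2) := by
  intro h
  obtain ⟨t, ht, hlt⟩ :=
    exists_pos_lt_comp_abs_sub_div_sqrt_two W hφ (one_lt_two (α := ℝ)).ne'
  exact hlt.not_ge (h (t * 2) (t * 1) (by positivity) (by positivity))

theorem isochoric_not_coercive_devU (k : ℝ) (hk : 0 < k) :
    ¬ ∃ K1 K2 α : ℝ, 0 < K1 ∧ 0 < K2 ∧ 0 < α ∧
      ∀ l1 l2 : ℝ, 0 < l1 → 0 < l2 →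
        Real.exp ((k / 2) * (Real.log (l1 / l2)) ^ 2) ≥
          K1 * (|l1 - l2| / Real.sqrt 2) ^ (α * k) - K2 := by
  rintro ⟨K1, K2, α, hK1, -, hα, h⟩
  exact isochoric_not_coercive_devU_general (fun r ↦ Real.exp ((k / 2) * (Real.log r) ^ 2))
    (tendsto_const_mul_rpow_sub_const_atTop hK1 (mul_pos hα hk) K2) h
end

section
/- Let μ, κ, k, k̂ > 0 and q ≥ 1. Then there exist constants K1, K2 > 0 such that for all λ1, λ2 > 0: (μ/k)·exp((k/2)·(log(λ1/λ2))²) + (κ/(2k̂))·exp(k̂·(log(λ1λ2))²) ≥ K1·((λ1−1)² + (λ2−1)²)^{q/2} − K2. -/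
/-!
Put `x = log l1`, `y = log l2` and `t = |x| + |y|`. The energy is a combination of exponentials of
`(x - y) ^ 2` and `(x + y) ^ 2`, and `t = max |x + y| |x - y|`, so one of them alone already
controls `exp (s * t ^ 2)` with `s = min (k / 2) khat`. On the other hand `‖U - 1‖ ≤ exp t`, since
`|exp x - 1| ≤ exp |x| - 1` and `exp - 1` is superadditive on nonnegative reals. Young's inequality
`q * t ≤ s * t ^ 2 + s⁻¹ * (q / 2) ^ 2` compares the two exponents.
-/

theorem abs_add_abs_eq_max {α : Type*} [AddCommGroup α] [LinearOrder α] [IsOrderedAddMonoid α]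
    (x y : α) : |x| + |y| = max |x + y| |x - y| := by
  grind

theorem abs_exp_sub_one_le_exp_abs_sub_one (x : ℝ) : |Real.exp x - 1| ≤ Real.exp |x| - 1 := by
  have hx : Real.exp x ≤ Real.exp |x| := Real.exp_le_exp.2 (le_abs_self x)
  have hx' : Real.exp (-x) ≤ Real.exp |x| := Real.exp_le_exp.2 (neg_le_abs x)
  rw [abs_le]
  constructor <;> linarith [Real.add_one_le_exp x, Real.add_one_le_exp (-x)]

theorem sum_exp_sub_one_le_exp_sum_sub_one {ι : Type*} (s : Finset ι) {f : ι → ℝ}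
    (hf : ∀ i ∈ s, 0 ≤ f i) :
    ∑ i ∈ s, (Real.exp (f i) - 1) ≤ Real.exp (∑ i ∈ s, f i) - 1 := by
  induction s using Finset.cons_induction with
  | empty => simp
  | cons a s ha ih =>
    rw [Finset.forall_mem_cons] at hf
    rw [Finset.sum_cons, Finset.sum_cons, Real.exp_add]
    have h_head : 1 ≤ Real.exp (f a) := Real.one_le_exp hf.1
    have h_tail : 1 ≤ Real.exp (∑ i ∈ s, f i) := Real.one_le_exp (Finset.sum_nonneg hf.2)
    linarith [ih hf.2, mul_nonneg (sub_nonneg.2 h_head) (sub_nonneg.2 h_tail)]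

theorem sum_exp_sub_one_sq_le_exp_sum_abs_sq {ι : Type*} (s : Finset ι) (f : ι → ℝ) :
    ∑ i ∈ s, (Real.exp (f i) - 1) ^ 2 ≤ Real.exp (∑ i ∈ s, |f i|) ^ 2 := by
  have h_nonneg (i : ι) : 0 ≤ Real.exp |f i| - 1 := sub_nonneg.2 (Real.one_le_exp (abs_nonneg _))
  calc ∑ i ∈ s, (Real.exp (f i) - 1) ^ 2
      ≤ ∑ i ∈ s, (Real.exp |f i| - 1) ^ 2 :=
        Finset.sum_le_sum fun i _ ↦
          sq_le_sq.2 <| (abs_exp_sub_one_le_exp_abs_sub_one _).trans (le_abs_self _)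
    _ ≤ (∑ i ∈ s, (Real.exp |f i| - 1)) ^ 2 :=
        Finset.sum_sq_le_sq_sum_of_nonneg fun i _ ↦ h_nonneg i
    _ ≤ Real.exp (∑ i ∈ s, |f i|) ^ 2 := by
        refine pow_le_pow_left₀ (Finset.sum_nonneg fun i _ ↦ h_nonneg i) ?_ 2
        linarith [sum_exp_sub_one_le_exp_sum_sub_one s fun i _ ↦ abs_nonneg (f i)]

theorem rpow_sum_exp_sub_one_sq_le_exp_mul_sum_abs {ι : Type*} (s : Finset ι) (f : ι → ℝ) {q : ℝ}
    (hq : 0 ≤ q) :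
    (∑ i ∈ s, (Real.exp (f i) - 1) ^ 2) ^ (q / 2) ≤ Real.exp (q * ∑ i ∈ s, |f i|) := by
  calc (∑ i ∈ s, (Real.exp (f i) - 1) ^ 2) ^ (q / 2)
      ≤ (Real.exp (∑ i ∈ s, |f i|) ^ 2) ^ (q / 2) :=
        Real.rpow_le_rpow (by positivity) (sum_exp_sub_one_sq_le_exp_sum_abs_sq s f) (by positivity)
    _ = Real.exp (q * ∑ i ∈ s, |f i|) := by
        rw [← Real.exp_nat_mul, ← Real.exp_mul]
        congr 1
        push_cast
        ring

theorem exp_mul_le_exp_sq_mul_exp_mul_sq {s : ℝ} (hs : 0 < s) (q t : ℝ) :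
    Real.exp (q * t) ≤ Real.exp (s⁻¹ * (q / 2) ^ 2) * Real.exp (s * t ^ 2) := by
  rw [← Real.exp_add, Real.exp_le_exp]
  linarith [two_mul_le_add_mul_sq (a := t) (b := q / 2) hs]

theorem min_mul_exp_min_mul_sq_le_add {c d : ℝ} (hc : 0 ≤ c) (hd : 0 ≤ d) (a b x y : ℝ) :
    min c d * Real.exp (min a b * (|x| + |y|) ^ 2) ≤
      c * Real.exp (a * (x - y) ^ 2) + d * Real.exp (b * (x + y) ^ 2) := by
  rw [abs_add_abs_eq_max]
  rcases max_choice |x + y| |x - y| with h_max | h_max <;> rw [h_max, sq_abs]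
  · calc min c d * Real.exp (min a b * (x + y) ^ 2)
        ≤ d * Real.exp (b * (x + y) ^ 2) := by
          gcongr
          exacts [min_le_right c d, min_le_right a b]
      _ ≤ _ := le_add_of_nonneg_left (by positivity)
  · calc min c d * Real.exp (min a b * (x - y) ^ 2)
        ≤ c * Real.exp (a * (x - y) ^ 2) := by
          gcongr
          exacts [min_le_left c d, min_le_left a b]
      _ ≤ _ := le_add_of_nonneg_right (by positivity)

theorem q_growth_coercivity_general (μ κ k khat q : ℝ)
    (hμ : 0 < μ) (hκ : 0 < κ) (hk : 0 < k) (hkhat : 0 < khat) (hq : 0 ≤ q) :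
    ∃ K : ℝ, 0 < K ∧ ∀ l1 l2 : ℝ, 0 < l1 → 0 < l2 →
      K * ((l1 - 1) ^ 2 + (l2 - 1) ^ 2) ^ (q / 2) ≤
        (μ / k) * Real.exp ((k / 2) * (Real.log (l1 / l2)) ^ 2) +
          (κ / (2 * khat)) * Real.exp (khat * (Real.log (l1 * l2)) ^ 2) := by
  set m := min (μ / k) (κ / (2 * khat))
  set s := min (k / 2) khat
  have hm : 0 < m := by positivity
  have hs : 0 < s := by positivity
  refine ⟨m * Real.exp (-(s⁻¹ * (q / 2) ^ 2)), by positivity, fun l1 l2 hl1 hl2 ↦ ?_⟩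
  rw [Real.log_div hl1.ne' hl2.ne', Real.log_mul hl1.ne' hl2.ne']
  set x := Real.log l1 with hx
  set y := Real.log l2 with hy
  have h_dist : ((l1 - 1) ^ 2 + (l2 - 1) ^ 2) ^ (q / 2) ≤ Real.exp (q * (|x| + |y|)) := by
    simpa [Fin.sum_univ_two, hx, hy, Real.exp_log hl1, Real.exp_log hl2] using
      rpow_sum_exp_sub_one_sq_le_exp_mul_sum_abs Finset.univ ![x, y] hq
  calc m * Real.exp (-(s⁻¹ * (q / 2) ^ 2)) * ((l1 - 1) ^ 2 + (l2 - 1) ^ 2) ^ (q / 2)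
      ≤ m * Real.exp (-(s⁻¹ * (q / 2) ^ 2)) *
          (Real.exp (s⁻¹ * (q / 2) ^ 2) * Real.exp (s * (|x| + |y|) ^ 2)) := by
        gcongr
        exact h_dist.trans (exp_mul_le_exp_sq_mul_exp_mul_sq hs _ _)
    _ = m * Real.exp (s * (|x| + |y|) ^ 2) := by
        rw [Real.exp_neg]
        field_simp
    _ ≤ _ := min_mul_exp_min_mul_sq_le_add (by positivity) (by positivity) _ _ x y

theorem q_growth_coercivity (μ κ k khat q : ℝ)
    (hμ : 0 < μ) (hκ : 0 < κ) (hk : 0 < k) (hkhat : 0 < khat) (hq : 1 ≤ q) :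
    ∃ K1 K2 : ℝ, 0 < K1 ∧ 0 < K2 ∧
      ∀ l1 l2 : ℝ, 0 < l1 → 0 < l2 →
        (μ / k) * Real.exp ((k / 2) * (Real.log (l1 / l2)) ^ 2) +
            (κ / (2 * khat)) * Real.exp (khat * (Real.log (l1 * l2)) ^ 2) ≥
          K1 * ((l1 - 1) ^ 2 + (l2 - 1) ^ 2) ^ (q / 2) - K2 := by
  obtain ⟨K, hK, h⟩ := q_growth_coercivity_general μ κ k khat q hμ hκ hk hkhat (by linarith)
  exact ⟨K, 1, hK, one_pos, fun l1 l2 hl1 hl2 ↦ by linarith [h l1 l2 hl1 hl2]⟩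
end

section
/- Let k be a real number. The inequality k − 1/(log a)² + 4a²/(a²−1)² ≥ 0 holds for all real a > 1 if and only if k ≥ 1/3. -/
/-!
With `a = exp x` the inequality says `1 / x² - 1 / sinh² x ≤ k` for all `x > 0`, so the optimal `k`
is the supremum of the left-hand side. Both bounds for it come from the power series of
`cosh (2 * x)` and `sinh² x = (cosh (2 * x) - 1) / 2`: truncating the series gives
`x² + x⁴ / 3 ≤ sinh² x`, and comparing each remainder with the previous one term by term gives
`3 (sinh² x - x²) ≤ x² sinh² x`. Hence `1 / (3 + x²) ≤ 1 / x² - 1 / sinh² x ≤ 1 / 3`, and the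
supremum is the limit `1 / 3` at `0`.
-/

open Filter Finset Topology
open scoped Nat

lemma sum_range_pow_div_factorial_le_cosh (n : ℕ) (x : ℝ) :
    ∑ i ∈ range n, x ^ (2 * i) / (2 * i)! ≤ Real.cosh x :=
  sum_le_hasSum _ (fun i _ ↦ div_nonneg ((even_two_mul i).pow_nonneg x) (by positivity))
    (Real.hasSum_cosh x)

lemma pow_div_factorial_two_mul_succ_le {m n : ℕ} (hnm : n ≤ m) (x : ℝ) :
    x ^ (2 * (m + 1)) / (2 * (m + 1))! ≤
      x ^ 2 / ((2 * n + 1) * (2 * n + 2)) * (x ^ (2 * m) / (2 * m)!) := by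
  have hx : 0 ≤ x ^ (2 * m) := (even_two_mul m).pow_nonneg x
  have hfactorial : ((2 * (m + 1))! : ℝ) = (2 * m + 1) * (2 * m + 2) * (2 * m)! := by
    rw [mul_add_one, Nat.factorial_succ, Nat.factorial_succ]
    push_cast
    ring
  calc x ^ (2 * (m + 1)) / (2 * (m + 1))!
      = x ^ 2 / ((2 * m + 1) * (2 * m + 2)) * (x ^ (2 * m) / (2 * m)!) := by
        rw [hfactorial, div_mul_div_comm, ← pow_add, mul_add_one, add_comm (2 * m) 2]
    _ ≤ x ^ 2 / ((2 * n + 1) * (2 * n + 2)) * (x ^ (2 * m) / (2 * m)!) := by gcongr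

lemma cosh_sub_sum_range_succ_le (n : ℕ) (x : ℝ) :
    Real.cosh x - ∑ i ∈ range (n + 1), x ^ (2 * i) / (2 * i)! ≤
      x ^ 2 / ((2 * n + 1) * (2 * n + 2)) *
        (Real.cosh x - ∑ i ∈ range n, x ^ (2 * i) / (2 * i)!) :=
  hasSum_le (fun i ↦ pow_div_factorial_two_mul_succ_le (Nat.le_add_left n i) x)
    ((hasSum_nat_add_iff' (n + 1)).2 (Real.hasSum_cosh x))
    (((hasSum_nat_add_iff' n).2 (Real.hasSum_cosh x)).mul_left _)

lemma cosh_two_mul_eq_one_add_two_mul_sinh_sq (x : ℝ) :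
    Real.cosh (2 * x) = 1 + 2 * Real.sinh x ^ 2 := by
  rw [Real.cosh_two_mul, Real.cosh_sq]
  ring

lemma sq_add_pow_four_div_three_le_sinh_sq (x : ℝ) : x ^ 2 + x ^ 4 / 3 ≤ Real.sinh x ^ 2 := by
  have h := sum_range_pow_div_factorial_le_cosh 3 (2 * x)
  norm_num [sum_range_succ, Nat.factorial, cosh_two_mul_eq_one_add_two_mul_sinh_sq] at h
  linarith

lemma sinh_sq_sub_sq_le (x : ℝ) :
    Real.sinh x ^ 2 - x ^ 2 ≤ x ^ 2 * Real.sinh x ^ 2 / 3 := by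
  have h := cosh_sub_sum_range_succ_le 1 (2 * x)
  norm_num [sum_range_succ, Nat.factorial, cosh_two_mul_eq_one_add_two_mul_sinh_sq] at h
  linarith

lemma one_div_sq_sub_one_div_sinh_sq_le {x : ℝ} (hx : x ≠ 0) :
    1 / x ^ 2 - 1 / Real.sinh x ^ 2 ≤ 1 / 3 := by
  have : Real.sinh x ≠ 0 := Real.sinh_eq_zero.not.2 hx
  rw [div_sub_div _ _ (by positivity) (by positivity), div_le_div_iff₀ (by positivity) three_pos]
  linarith [sinh_sq_sub_sq_le x]

lemma one_div_three_add_sq_le_one_div_sq_sub_one_div_sinh_sq {x : ℝ} (hx : x ≠ 0) :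
    1 / (3 + x ^ 2) ≤ 1 / x ^ 2 - 1 / Real.sinh x ^ 2 :=
  calc 1 / (3 + x ^ 2)
      = 1 / x ^ 2 - 1 / (x ^ 2 + x ^ 4 / 3) := by
        field_simp
        ring
    _ ≤ 1 / x ^ 2 - 1 / Real.sinh x ^ 2 := by
        gcongr
        exact sq_add_pow_four_div_three_le_sinh_sq x

lemma tendsto_one_div_sq_sub_one_div_sinh_sq :
    Tendsto (fun x : ℝ ↦ 1 / x ^ 2 - 1 / Real.sinh x ^ 2) (𝓝[≠] 0) (𝓝 (1 / 3)) := by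
  have hlower : Tendsto (fun x : ℝ ↦ 1 / (3 + x ^ 2)) (𝓝[≠] 0) (𝓝 (1 / 3)) := by
    have hcont : Continuous fun x : ℝ ↦ 1 / (3 + x ^ 2) :=
      continuous_const.div (by fun_prop) fun x ↦ by positivity
    exact (hcont.tendsto' 0 _ (by norm_num)).mono_left nhdsWithin_le_nhds
  refine tendsto_of_tendsto_of_tendsto_of_le_of_le' hlower tendsto_const_nhds ?_ ?_ <;>
    filter_upwards [self_mem_nhdsWithin] with x hx
  · exact one_div_three_add_sq_le_one_div_sq_sub_one_div_sinh_sq hx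
  · exact one_div_sq_sub_one_div_sinh_sq_le hx

lemma isLUB_one_div_sq_sub_one_div_sinh_sq :
    IsLUB ((fun x : ℝ ↦ 1 / x ^ 2 - 1 / Real.sinh x ^ 2) '' Set.Ioi 0) (1 / 3) := by
  refine ⟨Set.forall_mem_image.2 fun x hx ↦ one_div_sq_sub_one_div_sinh_sq_le (ne_of_gt hx), ?_⟩
  intro b hb
  have hright := tendsto_one_div_sq_sub_one_div_sinh_sq.mono_left (nhdsGT_le_nhdsNE 0)
  exact le_of_tendsto hright <|
    eventually_mem_nhdsWithin.mono fun x hx ↦ hb (Set.mem_image_of_mem _ hx)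

lemma four_mul_sq_div_sq_sub_one_sq {a : ℝ} (ha : 0 < a) :
    4 * a ^ 2 / (a ^ 2 - 1) ^ 2 = 1 / Real.sinh (Real.log a) ^ 2 := by
  have hsinh : Real.sinh (Real.log a) = (a ^ 2 - 1) / (2 * a) := by
    rw [Real.sinh_log ha]
    field_simp
  rw [hsinh, div_pow, one_div_div]
  ring

theorem scalar_hessian_inequality_iff (k : ℝ) :
    (∀ a : ℝ, 1 < a →
      k - 1 / (Real.log a) ^ 2 + 4 * a ^ 2 / (a ^ 2 - 1) ^ 2 ≥ 0) ↔ k ≥ 1 / 3 := by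
  rw [ge_iff_le, isLUB_le_iff isLUB_one_div_sq_sub_one_div_sinh_sq, mem_upperBounds,
    Set.forall_mem_image]
  constructor
  · intro h x hx
    have := h (Real.exp x) (Real.one_lt_exp_iff.2 hx)
    rw [four_mul_sq_div_sq_sub_one_sq (Real.exp_pos x), Real.log_exp] at this
    linarith
  · intro h a ha
    rw [four_mul_sq_div_sq_sub_one_sq (one_pos.trans ha)]
    linarith [h (Set.mem_Ioi.2 (Real.log_pos ha))]
end

section
/- Let k be a real number. The inequality −(i1² + R²)·log((i1+R)/(i1−R)) + 2·i1·R·(1 + k·(log((i1+R)/(i1−R)))²) ≥ 0 holds for all real numbers R, i1 with 0 < R < i1 if and only if k ≥ 1/3. -/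
/-!
The pair `(i1, R)` has the Lorentz polar form `r • (cosh (t / 2), sinh (t / 2))` with
`r² = i1² - R²` and `t = log ((i1 + R) / (i1 - R))`, so dividing by `r²` turns the inequality into
`t * cosh t ≤ sinh t * (1 + k * t²)` for all `t > 0`. Together with `sinh t + t³ / 3 ≤ t * cosh t`
this gives `t / 3 ≤ k * sinh t`, and `t → 0` forces `1 / 3 ≤ k`. Conversely, comparing derivatives
reduces the case `k = 1 / 3` to `sinh t ≤ t * cosh t`.
-/

open Filter Real Set Topology

section HyperbolicInequalities

lemma hasDerivAt_self_mul_cosh (x : ℝ) :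
    HasDerivAt (fun t ↦ t * cosh t) (cosh x + x * sinh x) x :=
  ((hasDerivAt_id' x).mul (hasDerivAt_cosh x)).congr_deriv (by rw [one_mul])

lemma sinh_add_cube_div_three_le_self_mul_cosh {t : ℝ} (ht : 0 ≤ t) :
    sinh t + t ^ 3 / 3 ≤ t * cosh t := by
  have hasDerivAt_left (x : ℝ) : HasDerivAt (fun t ↦ sinh t + t ^ 3 / 3) (cosh x + x ^ 2) x :=
    ((hasDerivAt_sinh x).add ((hasDerivAt_pow 3 x).div_const 3)).congr_deriv (by norm_num)
  refine image_le_of_deriv_right_le_deriv_boundary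
    (fun x _ ↦ (hasDerivAt_left x).continuousAt.continuousWithinAt)
    (fun x _ ↦ (hasDerivAt_left x).hasDerivWithinAt) (by simp)
    (fun x _ ↦ (hasDerivAt_self_mul_cosh x).continuousAt.continuousWithinAt)
    (fun x _ ↦ (hasDerivAt_self_mul_cosh x).hasDerivWithinAt) (fun x hx ↦ ?_) (right_mem_Icc.2 ht)
  have self_le_sinh : x ≤ sinh x := self_le_sinh_iff.2 hx.1
  linarith [mul_le_mul_of_nonneg_left self_le_sinh hx.1]

lemma self_mul_cosh_le_sinh_mul_one_add_sq_div_three {t : ℝ} (ht : 0 ≤ t) :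
    t * cosh t ≤ sinh t * (1 + t ^ 2 / 3) := by
  have hasDerivAt_right (x : ℝ) : HasDerivAt (fun t ↦ sinh t * (1 + t ^ 2 / 3))
      (cosh x * (1 + x ^ 2 / 3) + sinh x * (2 * x / 3)) x :=
    ((hasDerivAt_sinh x).mul (((hasDerivAt_pow 2 x).div_const 3).const_add 1)).congr_deriv
      (by norm_num)
  refine image_le_of_deriv_right_le_deriv_boundary
    (fun x _ ↦ (hasDerivAt_self_mul_cosh x).continuousAt.continuousWithinAt)
    (fun x _ ↦ (hasDerivAt_self_mul_cosh x).hasDerivWithinAt) (by simp)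
    (fun x _ ↦ (hasDerivAt_right x).continuousAt.continuousWithinAt)
    (fun x _ ↦ (hasDerivAt_right x).hasDerivWithinAt) (fun x hx ↦ ?_) (right_mem_Icc.2 ht)
  have sinh_le_self_mul_cosh : sinh x ≤ x * cosh x := by
    linarith [sinh_add_cube_div_three_le_self_mul_cosh hx.1, pow_nonneg hx.1 3]
  linarith [mul_le_mul_of_nonneg_left sinh_le_self_mul_cosh hx.1]

lemma le_of_forall_pos_mul_self_le_mul_sinh {c k : ℝ}
    (h : ∀ t : ℝ, 0 < t → c * t ≤ k * sinh t) : c ≤ k := by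
  have tendsto_slope : Tendsto (fun t ↦ k * (t⁻¹ * sinh t)) (𝓝[>] 0) (𝓝 k) := by
    simpa using (hasDerivAt_sinh 0).tendsto_slope_zero_right.const_mul k
  refine ge_of_tendsto tendsto_slope ?_
  filter_upwards [self_mem_nhdsWithin] with t (ht : 0 < t)
  calc c ≤ k * sinh t / t := (le_div_iff₀ ht).2 (h t ht)
    _ = k * (t⁻¹ * sinh t) := by ring

lemma forall_pos_self_mul_cosh_le_sinh_mul_iff {k : ℝ} :
    (∀ t : ℝ, 0 < t → t * cosh t ≤ sinh t * (1 + k * t ^ 2)) ↔ 1 / 3 ≤ k := by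
  refine ⟨fun h ↦ le_of_forall_pos_mul_self_le_mul_sinh fun t ht ↦ ?_, fun hk t ht ↦ ?_⟩
  · refine le_of_mul_le_mul_left ?_ (pow_pos ht 2)
    linarith [h t ht, sinh_add_cube_div_three_le_self_mul_cosh ht.le]
  · calc t * cosh t ≤ sinh t * (1 + t ^ 2 / 3) :=
          self_mul_cosh_le_sinh_mul_one_add_sq_div_three ht.le
      _ = sinh t * (1 + 1 / 3 * t ^ 2) := by ring
      _ ≤ sinh t * (1 + k * t ^ 2) :=
          mul_le_mul_of_nonneg_left (by gcongr) (sinh_nonneg_iff.2 ht.le)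

end HyperbolicInequalities

section LogSubstitution

lemma log_cosh_add_sinh_div_cosh_sub_sinh (s : ℝ) :
    log ((cosh s + sinh s) / (cosh s - sinh s)) = 2 * s := by
  rw [cosh_add_sinh, cosh_sub_sinh, ← exp_sub, log_exp, sub_neg_eq_add, two_mul]

variable {x y : ℝ}

lemma sq_sub_sq_mul_sinh_log_div (hadd : 0 < x + y) (hsub : 0 < x - y) :
    (x ^ 2 - y ^ 2) * sinh (log ((x + y) / (x - y))) = 2 * x * y := by
  rw [sinh_log (div_pos hadd hsub)]
  field_simp
  ring

lemma sq_sub_sq_mul_cosh_log_div (hadd : 0 < x + y) (hsub : 0 < x - y) :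
    (x ^ 2 - y ^ 2) * cosh (log ((x + y) / (x - y))) = x ^ 2 + y ^ 2 := by
  rw [cosh_log (div_pos hadd hsub)]
  field_simp
  ring

lemma hessian_determinant_nonneg_iff_of_log_eq {t : ℝ} (k : ℝ) (hadd : 0 < x + y)
    (hsub : 0 < x - y) (ht : log ((x + y) / (x - y)) = t) :
    0 ≤ -(x ^ 2 + y ^ 2) * t + 2 * x * y * (1 + k * t ^ 2) ↔
      t * cosh t ≤ sinh t * (1 + k * t ^ 2) := by
  have sq_sub_sq_pos : 0 < x ^ 2 - y ^ 2 := sq_sub_sq x y ▸ mul_pos hadd hsub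
  have hsinh : (x ^ 2 - y ^ 2) * sinh t = 2 * x * y := ht ▸ sq_sub_sq_mul_sinh_log_div hadd hsub
  have hcosh : (x ^ 2 - y ^ 2) * cosh t = x ^ 2 + y ^ 2 :=
    ht ▸ sq_sub_sq_mul_cosh_log_div hadd hsub
  have factorization : -(x ^ 2 + y ^ 2) * t + 2 * x * y * (1 + k * t ^ 2) =
      (x ^ 2 - y ^ 2) * (sinh t * (1 + k * t ^ 2) - t * cosh t) := by
    linear_combination t * hcosh - (1 + k * t ^ 2) * hsinh
  rw [factorization, mul_nonneg_iff_of_pos_left sq_sub_sq_pos, sub_nonneg]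

end LogSubstitution

theorem hessian_determinant_inequality_iff (k : ℝ) :
    (∀ R i1 : ℝ, 0 < R → R < i1 →
      -(i1 ^ 2 + R ^ 2) * Real.log ((i1 + R) / (i1 - R)) +
        2 * i1 * R * (1 + k * (Real.log ((i1 + R) / (i1 - R))) ^ 2) ≥ 0) ↔
      k ≥ 1 / 3 := by
  refine Iff.trans ⟨fun h t ht ↦ ?_, fun h R i1 hR hRi1 ↦ ?_⟩
    forall_pos_self_mul_cosh_le_sinh_mul_iff
  · have sinh_pos : 0 < sinh (t / 2) := sinh_pos_iff.2 (half_pos ht)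
    have sinh_lt_cosh : sinh (t / 2) < cosh (t / 2) := sinh_lt_cosh _
    have log_eq : log ((cosh (t / 2) + sinh (t / 2)) / (cosh (t / 2) - sinh (t / 2))) = t :=
      (log_cosh_add_sinh_div_cosh_sub_sinh _).trans (mul_div_cancel₀ t two_ne_zero)
    have hessian_nonneg := h _ _ sinh_pos sinh_lt_cosh
    rw [log_eq] at hessian_nonneg
    exact (hessian_determinant_nonneg_iff_of_log_eq k (by linarith) (sub_pos.2 sinh_lt_cosh)
      log_eq).1 hessian_nonneg
  · have log_pos : 0 < log ((i1 + R) / (i1 - R)) :=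
      log_pos ((one_lt_div (sub_pos.2 hRi1)).2 (by linarith))
    exact (hessian_determinant_nonneg_iff_of_log_eq k (by linarith) (sub_pos.2 hRi1) rfl).2
      (h _ log_pos)
end
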